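/- arXiv:0904.4655 — 3 statements merged into one kernel-verified Lean document; each statement's English description precedes it below -/
import Mathlib

section
/- Let M ≥ 1 be an integer, α a real with 0 < α < 1, t ≥ 0 a real, and let n ≥ M+1 be an integer. Then for all integers 1 ≤ j, k ≤ n, the sum ∑_{x∈ℤ} Φ^{n,t}_{n-j}(x)·Ψ^{n,t}_{n-k}(x) converges absolutely and equals δ_{j,k} (i.e. 1 if j = k and 0 otherwise). In particular it vanishes both when j ≥ M+1, k ≤ M and when j ≤ M, k ≥ M+1. -/
open Complex Real MeasureTheory


noncomputable section

/-- `Ψ^{n,t}_{n-j}(x)` for `n ≥ M+1`, combining the two cases `j ≤ M` and `j ≥ M+1`.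
The contour is the circle `|w| = 2` (the value is independent of the radius `R > 1`). -/
def Psi (M : ℕ) (α : ℝ) (n j : ℕ) (t : ℝ) (x : ℤ) : ℂ :=
  if j ≤ M then
    (2 * (π : ℂ) * I)⁻¹ * ∮ w in C((0 : ℂ), 2),
      w⁻¹ * (w * (w - 1)) ^ ((n : ℤ) - (M : ℤ)) *
        (w * (w - (α : ℂ))) ^ ((M : ℤ) - (j : ℤ)) * Complex.exp ((t : ℂ) * w) *
        w ^ (-(x + 2 * (n : ℤ) - 2 * (M : ℤ)))
  else
    (2 * (π : ℂ) * I)⁻¹ * ∮ w in C((0 : ℂ), 2),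
      w⁻¹ * (w * (w - 1)) ^ ((n : ℤ) - (j : ℤ)) * Complex.exp ((t : ℂ) * w) *
        w ^ (-(x + 2 * (n : ℤ) - 2 * (M : ℤ)))

/-- Integrand of the double contour integral defining `Φ^{n,t}_{n-j}(x)` for `1 ≤ j ≤ M`. -/
def phiLowInt (M : ℕ) (α : ℝ) (n j : ℕ) (t : ℝ) (x : ℤ) (v z : ℂ) : ℂ :=
  (1 + 2 * z) * (2 * v + 2 - (α : ℂ)) / ((z - v) * (z + v + 1)) *
    (1 + z) ^ (x + 2 * (n : ℤ) - 2 * (M : ℤ)) * Complex.exp (-((t : ℂ) * (z + 1))) *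
    (z * (1 + z)) ^ (-((n : ℤ) - (M : ℤ))) *
    ((v + 1) * (v + 1 - (α : ℂ))) ^ (-((M : ℤ) - (j : ℤ) + 1))

/-- `Φ^{n,t}_{n-j}(x)` for `n ≥ M+1`, combining the two cases.  For `j ≤ M` it is the double
contour integral where the `v`-contour is a circle of radius `rv` around `α-1` (enclosing
exactly `α-1`) and, for each `v`, the `z`-contour encloses exactly `0` and `v` (sum of two
circles of radius `rz`).  For `j ≥ M+1` it is a single integral over a circle of radius `rz`
around `0` (enclosing exactly `0`). -/
def Phi (M : ℕ) (α : ℝ) (n j : ℕ) (t : ℝ) (rv rz : ℝ) (x : ℤ) : ℂ :=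
  if j ≤ M then
    (2 * (π : ℂ) * I)⁻¹ * ∮ v in C((α : ℂ) - 1, rv),
      (2 * (π : ℂ) * I)⁻¹ *
        ((∮ z in C((0 : ℂ), rz), phiLowInt M α n j t x v z) +
         (∮ z in C(v, rz), phiLowInt M α n j t x v z))
  else
    (2 * (π : ℂ) * I)⁻¹ * ∮ v in C((0 : ℂ), rz),
      (1 + 2 * v) * (1 + v) ^ (x + 2 * (n : ℤ) - 2 * (M : ℤ)) *
        Complex.exp (-((t : ℂ) * (v + 1))) *
        (v * (1 + v)) ^ (-((n : ℤ) - (j : ℤ) + 1))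

/-!
Put `f z = z (z + 1)`. For fixed `k` the numbers `Psi` are the Laurent coefficients of an entire
function `F`, and `Phi` is a contour integral of powers of `1 + z`; summing over `x` under the
integral sign replaces the power `(1 + z) ^ y` by `F (1 + z)`, in which the exponentials cancel.

For `j > M` the sum is then `(2πi)⁻¹ ∮ f' f ^ (j - k - 1) = δ_{jk}` if `k > M`, and an integral of a
holomorphic function if `k ≤ M`. For `j ≤ M` the kernel `(1 + 2z) / ((z - v) (z + v + 1))` equals
`f' z / (f z - f v)`, the Cauchy kernel in the variable `f`: its contribution around `v` evaluates
the integrand at `v`, and its contribution around `0` subtracts the principal part in `f`. If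
`k > M` the integrand is a negative power of `f`, so nothing is left; if `k ≤ M` it is holomorphic
at `0`, and `(2πi)⁻¹ ∮ q' q ^ (j - k - 1) = δ_{jk}` remains, with `q v = (v + 1) (v + 1 - α)`.
-/

open Metric Topology

section CircleIntegral

variable {E : Type*} [NormedAddCommGroup E] [NormedSpace ℂ E] {c : ℂ} {R : ℝ}

theorem continuousOn_circleIntegral {X : Type*} [TopologicalSpace X] {s : Set X} {f : X → ℂ → E}
    (hR : 0 ≤ R) (hf : ContinuousOn (Function.uncurry f) (s ×ˢ sphere c R)) :
    ContinuousOn (fun x => ∮ z in C(c, R), f x z) s := by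
  rw [continuousOn_iff_continuous_domRestrict]
  have hmem (p : s × ℝ) : (p.1.1, circleMap c R p.2) ∈ s ×ˢ sphere c R :=
    ⟨p.1.2, circleMap_mem_sphere c hR p.2⟩
  have hcomp : Continuous fun p : s × ℝ => f p.1 (circleMap c R p.2) :=
    hf.comp_continuous (by fun_prop) hmem
  refine intervalIntegral.continuous_parametric_intervalIntegral_of_continuous'
    (f := fun (x : s) θ => deriv (circleMap c R) θ • f x (circleMap c R θ)) ?_ _ _
  simp only [deriv_circleMap]
  exact Continuous.smul (by fun_prop) hcomp

theorem hasSum_circleIntegral_of_norm_le [CompleteSpace E] {ι : Type*} [Countable ι]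
    {f : ι → ℂ → E} {g : ℂ → E} {b : ι → ℝ}
    (hR : 0 ≤ R) (hf : ∀ i, ContinuousOn (f i) (sphere c R)) (hb : Summable b)
    (hfb : ∀ i, ∀ z ∈ sphere c R, ‖f i z‖ ≤ b i)
    (hfg : ∀ z ∈ sphere c R, HasSum (fun i => f i z) (g z)) :
    HasSum (fun i => ∮ z in C(c, R), f i z) (∮ z in C(c, R), g z) := by
  have huniform : TendstoUniformlyOn (fun (s : Finset ι) z => ∑ i ∈ s, f i z)
      g Filter.atTop (sphere c R) :=
    (tendstoUniformlyOn_tsum hb hfb).congr_right fun z hz => (hfg z hz).tsum_eq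
  have hlim := huniform.tendsto_circleIntegral_of_continuousOn hR
    (Filter.Eventually.of_forall fun s => continuousOn_finsetSum s fun i _ => hf i)
  refine hlim.congr fun s => ?_
  exact circleIntegral.integral_fun_sum fun i _ => (hf i).circleIntegrable hR

theorem circleIntegral_deriv_div_sub_mul_eq_zero {f : ℂ → ℂ} {a : ℂ} {P : ℂ → ℂ}
    (hR : 0 ≤ R) (hf : AnalyticOnNhd ℂ f (closedBall c R)) (ha : ∀ z ∈ closedBall c R, f z ≠ a)
    (hP : DifferentiableOn ℂ P (closedBall c R)) :
    (∮ z in C(c, R), deriv f z / (f z - a) * P z) = 0 :=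
  (((hf.deriv.differentiableOn.div (hf.differentiableOn.sub_const a)
    fun z hz => sub_ne_zero.2 (ha z hz)).mul hP).mono
      closure_ball_subset_closedBall).diffContOnCl.circleIntegral_eq_zero hR

end CircleIntegral

/-- The holomorphic function `f` has a simple zero at `c` and no other zero in the closed disc of
radius `r > 0` around `c`. -/
structure IsSoleSimpleZero (f : ℂ → ℂ) (c : ℂ) (r : ℝ) : Prop where
  radius_pos : 0 < r
  analyticOnNhd : AnalyticOnNhd ℂ f (closedBall c r)
  apply_center : f c = 0
  deriv_center_ne_zero : deriv f c ≠ 0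
  apply_ne_zero : ∀ z ∈ closedBall c r, z ≠ c → f z ≠ 0

namespace IsSoleSimpleZero

variable {f : ℂ → ℂ} {c : ℂ} {r : ℝ}

theorem apply_ne_zero_of_mem_sphere (h : IsSoleSimpleZero f c r) {z : ℂ} (hz : z ∈ sphere c r) :
    f z ≠ 0 :=
  h.apply_ne_zero z (sphere_subset_closedBall hz) (ne_of_mem_sphere hz h.radius_pos.ne')

theorem ne_zero_of_forall_apply_ne (h : IsSoleSimpleZero f c r) {a : ℂ}
    (ha : ∀ z ∈ closedBall c r, f z ≠ a) : a ≠ 0 := fun h0 =>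
  ha c (mem_closedBall_self h.radius_pos.le) (h.apply_center.trans h0.symm)

theorem circleIntegral_deriv_div_mul (h : IsSoleSimpleZero f c r) {P : ℂ → ℂ}
    (hP : DifferentiableOn ℂ P (closedBall c r)) :
    (∮ z in C(c, r), deriv f z / f z * P z) = 2 * π * I * P c := by
  have hc : closedBall c r ∈ 𝓝 c := closedBall_mem_nhds c h.radius_pos
  have hfactor (z : ℂ) : f z = (z - c) * dslope f c z := by
    simpa [h.apply_center] using (sub_smul_dslope f c z).symm
  have hslope : ∀ z ∈ closedBall c r, dslope f c z ≠ 0 := fun z hz => by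
    rcases eq_or_ne z c with rfl | hzc
    · rw [dslope_same]; exact h.deriv_center_ne_zero
    · exact fun h0 => h.apply_ne_zero z hz hzc (by rw [hfactor, h0, mul_zero])
  have hdiff : DifferentiableOn ℂ (fun z => deriv f z / dslope f c z * P z) (closedBall c r) :=
    ((h.analyticOnNhd.deriv.differentiableOn).div
      ((differentiableOn_dslope hc).2 h.analyticOnNhd.differentiableOn) hslope).mul hP
  have hcauchy := hdiff.circleIntegral_sub_inv_smul (mem_ball_self h.radius_pos)
  rw [dslope_same, div_self h.deriv_center_ne_zero, one_mul] at hcauchy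
  rw [← smul_eq_mul, ← hcauchy]
  refine circleIntegral.integral_congr h.radius_pos.le fun z _ => ?_
  simp only [hfactor z, smul_eq_mul, div_eq_mul_inv, mul_inv]
  generalize (z - c)⁻¹ = w
  ring

theorem circleIntegral_deriv_mul_zpow (h : IsSoleSimpleZero f c r) (m : ℤ) :
    (∮ z in C(c, r), deriv f z * f z ^ m) = if m = -1 then 2 * (π : ℂ) * I else 0 := by
  split_ifs with hm
  · simpa [hm, div_eq_mul_inv] using h.circleIntegral_deriv_div_mul (P := 1)
      (differentiableOn_const 1)
  · have hm' : (m : ℂ) + 1 ≠ 0 := by exact_mod_cast fun h0 => hm (by omega)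
    refine circleIntegral.integral_eq_zero_of_hasDerivWithinAt
      (f := fun z => f z ^ (m + 1) / ((m + 1 : ℤ) : ℂ)) h.radius_pos.le fun z hz => ?_
    have hz0 := h.apply_ne_zero_of_mem_sphere hz
    have hfz := (h.analyticOnNhd z (sphere_subset_closedBall hz)).differentiableAt.hasDerivAt
    refine (((hasDerivAt_zpow (m + 1) (f z) (.inl hz0)).comp z hfz).div_const _
      |>.congr_deriv ?_).hasDerivWithinAt
    rw [add_sub_cancel_right]
    push_cast
    field_simp

theorem continuousOn_zpow (h : IsSoleSimpleZero f c r) (m : ℤ) :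
    ContinuousOn (fun z => f z ^ m) (sphere c r) :=
  (h.analyticOnNhd.continuousOn.mono sphere_subset_closedBall).zpow₀ m
    fun _ hz => .inl (h.apply_ne_zero_of_mem_sphere hz)

theorem circleIntegral_deriv_div_sub_mul_zpow_sub_one (h : IsSoleSimpleZero f c r) {a : ℂ}
    (ha : ∀ z ∈ closedBall c r, f z ≠ a) (m : ℤ) :
    (∮ z in C(c, r), deriv f z / (f z - a) * f z ^ (m - 1)) =
      a⁻¹ * ((∮ z in C(c, r), deriv f z / (f z - a) * f z ^ m) -
        ∮ z in C(c, r), deriv f z * f z ^ (m - 1)) := by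
  have hr := h.radius_pos.le
  have ha0 := h.ne_zero_of_forall_apply_ne ha
  have hf := h.analyticOnNhd.mono sphere_subset_closedBall
  have hsub : ∀ z ∈ sphere c r, f z - a ≠ 0 := fun z hz =>
    sub_ne_zero.2 (ha z (sphere_subset_closedBall hz))
  have hintegrable_kernel : CircleIntegrable (fun z => deriv f z / (f z - a) * f z ^ m) c r :=
    ((hf.deriv.continuousOn.div (hf.continuousOn.sub continuousOn_const) hsub).mul
      (h.continuousOn_zpow m)).circleIntegrable hr
  have hintegrable_power : CircleIntegrable (fun z => deriv f z * f z ^ (m - 1)) c r :=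
    (hf.deriv.continuousOn.mul (h.continuousOn_zpow (m - 1))).circleIntegrable hr
  rw [← circleIntegral.integral_sub hintegrable_kernel hintegrable_power,
    ← circleIntegral.integral_const_mul]
  refine circleIntegral.integral_congr hr fun z hz => ?_
  have hz0 := h.apply_ne_zero_of_mem_sphere hz
  have hza := hsub z hz
  simp only [zpow_sub_one₀ hz0]
  field_simp
  ring

theorem circleIntegral_deriv_div_sub_mul_zpow_neg (h : IsSoleSimpleZero f c r) {a : ℂ}
    (ha : ∀ z ∈ closedBall c r, f z ≠ a) (p : ℕ) :
    (∮ z in C(c, r), deriv f z / (f z - a) * f z ^ (-(p : ℤ) - 1)) =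
      -(2 * π * I) * a ^ (-(p : ℤ) - 1) := by
  have hr := h.radius_pos.le
  have ha0 := h.ne_zero_of_forall_apply_ne ha
  rw [h.circleIntegral_deriv_div_sub_mul_zpow_sub_one ha, h.circleIntegral_deriv_mul_zpow,
    zpow_sub_one₀ ha0]
  induction p with
  | zero =>
    have hholo : (∮ z in C(c, r), deriv f z / (f z - a)) = 0 := by
      simpa using circleIntegral_deriv_div_sub_mul_eq_zero (P := 1) hr h.analyticOnNhd ha
        (differentiableOn_const 1)
    simp [hholo, mul_comm]
  | succ p ih =>
    have hexp : -((p + 1 : ℕ) : ℤ) = -(p : ℤ) - 1 := by push_cast; ring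
    rw [hexp, h.circleIntegral_deriv_div_sub_mul_zpow_sub_one ha, h.circleIntegral_deriv_mul_zpow,
      ih, if_neg (by omega), zpow_sub_one₀ ha0]
    ring

end IsSoleSimpleZero

/-- The coefficient of `w ^ y` in the Laurent expansion of `F` at `0`, as a contour integral over
the circle of radius `R`. -/
def laurentCoeff (F : ℂ → ℂ) (R : ℝ) (y : ℤ) : ℂ :=
  (2 * (π : ℂ) * I)⁻¹ * ∮ w in C((0 : ℂ), R), w⁻¹ * F w * w ^ (-y)

section LaurentCoeff

variable {F φ : ℂ → ℂ} {R : ℝ}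

theorem hasSum_laurentCoeff_mul_pow (hF : Differentiable ℂ F) (hR : 0 < R) (w : ℂ) :
    HasSum (fun m : ℕ => laurentCoeff F R m * w ^ m) (F w) := by
  lift R to NNReal using hR.le
  have hseries := (hF.hasFPowerSeriesOnBall 0 (NNReal.coe_pos.1 hR)).hasSum (y := w) (by simp)
  rw [zero_add] at hseries
  refine hseries.congr_fun fun m => ?_
  rw [cauchyPowerSeries_apply, laurentCoeff, smul_eq_mul, mul_right_comm, mul_assoc,
    mul_comm (w ^ m), mul_comm _ (w ^ m), ← circleIntegral.integral_const_mul]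
  congr 2
  ext z
  simp only [sub_zero, smul_eq_mul, zpow_neg, zpow_natCast, div_pow]
  ring

theorem laurentCoeff_of_neg (hF : Differentiable ℂ F) (hR : 0 < R) {y : ℤ} (hy : y < 0) :
    laurentCoeff F R y = 0 := by
  obtain ⟨p, rfl⟩ : ∃ p : ℕ, y = -(p : ℤ) - 1 := ⟨(-y - 1).toNat, by omega⟩
  have hint : (∮ w in C((0 : ℂ), R), w⁻¹ * F w * w ^ (-(-(p : ℤ) - 1))) =
      ∮ w in C((0 : ℂ), R), F w * w ^ p := by
    refine circleIntegral.integral_congr hR.le fun w hw => ?_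
    have hw0 : w ≠ 0 := ne_of_mem_sphere hw hR.ne'
    have hexp : -(-(p : ℤ) - 1) = p + 1 := by ring
    simp only [hexp, zpow_add_one₀ hw0, zpow_natCast]
    field_simp
  have hholo : Differentiable ℂ fun w => F w * w ^ p := by fun_prop
  rw [laurentCoeff, hint, hholo.diffContOnCl.circleIntegral_eq_zero hR.le, mul_zero]

theorem summable_norm_laurentCoeff_mul_pow (hF : Differentiable ℂ F) (hR : 0 < R) {ρ : ℝ}
    (hρ : 0 ≤ ρ) : Summable fun m : ℕ => ‖laurentCoeff F R m‖ * ρ ^ m := by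
  simpa [abs_of_nonneg hρ] using (hasSum_laurentCoeff_mul_pow hF hR (ρ : ℂ)).summable.norm

theorem hasSum_mul_laurentCoeff_add (hF : Differentiable ℂ F) (hR : 0 < R) {a : ℤ → ℂ}
    {S : ℂ} (h : HasSum (fun m : ℕ => laurentCoeff F R m * a m) S) (d : ℤ) :
    HasSum (fun x : ℤ => a (x + d) * laurentCoeff F R (x + d)) S := by
  refine (Equiv.addRight d).hasSum_iff (f := fun y => a y * laurentCoeff F R y).2 ?_
  refine (Nat.cast_injective.hasSum_iff fun y hy => ?_).1
    (by simpa [Function.comp_def, mul_comm] using h)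
  rw [laurentCoeff_of_neg hF hR, mul_zero]
  by_contra! hy0
  exact hy ⟨y.toNat, Int.toNat_of_nonneg hy0⟩

theorem hasSum_laurentCoeff_mul_circleIntegral (hF : Differentiable ℂ F) (hR : 0 < R) {c : ℂ}
    {r : ℝ} (hr : 0 ≤ r) {g : ℂ → ℂ} (hg : ContinuousOn g (sphere c r))
    (hφ : ContinuousOn φ (sphere c r)) :
    HasSum (fun m : ℕ => laurentCoeff F R m * ∮ z in C(c, r), g z * φ z ^ m)
      (∮ z in C(c, r), g z * F (φ z)) := by
  obtain ⟨B, hB⟩ := (isCompact_sphere c r).exists_bound_of_continuousOn hg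
  obtain ⟨ρ, hρ⟩ := (isCompact_sphere c r).exists_bound_of_continuousOn hφ
  have hsummable : Summable fun m : ℕ => B * (‖laurentCoeff F R m‖ * max ρ 0 ^ m) :=
    (summable_norm_laurentCoeff_mul_pow hF hR (le_max_right ρ 0)).mul_left B
  simp_rw [← circleIntegral.integral_const_mul]
  refine hasSum_circleIntegral_of_norm_le hr (fun m => by fun_prop) hsummable
    (fun m z hz => ?_) fun z _ => ?_
  · rw [mul_left_comm, norm_mul, norm_mul, norm_pow]
    gcongr
    · exact (norm_nonneg _).trans (hB z hz)
    · exact hB z hz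
    · exact (hρ z hz).trans (le_max_left ρ 0)
  · simpa only [mul_left_comm] using (hasSum_laurentCoeff_mul_pow hF hR (φ z)).mul_left (g z)

theorem hasSum_laurentCoeff_mul_circleIntegral_circleIntegral (hF : Differentiable ℂ F)
    (hR : 0 < R) {c₁ c₂ : ℂ} {r₁ r₂ : ℝ} (hr₁ : 0 ≤ r₁) (hr₂ : 0 ≤ r₂) {g : ℂ → ℂ → ℂ}
    (hg : ContinuousOn (Function.uncurry g) (sphere c₁ r₁ ×ˢ sphere c₂ r₂))
    (hφ : ContinuousOn φ (sphere c₂ r₂)) :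
    HasSum (fun m : ℕ => laurentCoeff F R m *
        ∮ v in C(c₁, r₁), ∮ z in C(c₂, r₂), g v z * φ z ^ m)
      (∮ v in C(c₁, r₁), ∮ z in C(c₂, r₂), g v z * F (φ z)) := by
  obtain ⟨B, hB⟩ :=
    ((isCompact_sphere c₁ r₁).prod (isCompact_sphere c₂ r₂)).exists_bound_of_continuousOn hg
  obtain ⟨ρ, hρ⟩ := (isCompact_sphere c₂ r₂).exists_bound_of_continuousOn hφ
  have hsummable : Summable fun m : ℕ =>
      2 * π * r₂ * B * (‖laurentCoeff F R m‖ * max ρ 0 ^ m) :=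
    (summable_norm_laurentCoeff_mul_pow hF hR (le_max_right ρ 0)).mul_left _
  have hφ₂ : ContinuousOn (fun p : ℂ × ℂ => φ p.2) (sphere c₁ r₁ ×ˢ sphere c₂ r₂) :=
    hφ.comp continuousOn_snd fun _ hp => hp.2
  simp_rw [← circleIntegral.integral_const_mul (laurentCoeff F R _) _ c₁]
  refine hasSum_circleIntegral_of_norm_le hr₁ (fun m => ?_) hsummable (fun m v hv => ?_)
    fun v hv => ?_
  · exact continuousOn_const.mul (continuousOn_circleIntegral hr₂ (hg.mul (hφ₂.pow m)))
  · have hinner : ‖∮ z in C(c₂, r₂), g v z * φ z ^ m‖ ≤ 2 * π * r₂ * (B * max ρ 0 ^ m) := by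
      refine circleIntegral.norm_integral_le_of_norm_le_const hr₂ fun z hz => ?_
      have hBz : ‖g v z‖ ≤ B := hB (v, z) ⟨hv, hz⟩
      rw [norm_mul, norm_pow]
      gcongr
      · exact (norm_nonneg _).trans hBz
      · exact (hρ z hz).trans (le_max_left ρ 0)
    calc ‖laurentCoeff F R m * ∮ z in C(c₂, r₂), g v z * φ z ^ m‖
        ≤ ‖laurentCoeff F R m‖ * (2 * π * r₂ * (B * max ρ 0 ^ m)) := by
          rw [norm_mul]; gcongr
      _ = 2 * π * r₂ * B * (‖laurentCoeff F R m‖ * max ρ 0 ^ m) := by ring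
  · have hgv : ContinuousOn (g v) (sphere c₂ r₂) :=
      hg.comp (Continuous.prodMk_right v).continuousOn fun z hz => ⟨hv, hz⟩
    exact hasSum_laurentCoeff_mul_circleIntegral hF hR hr₂ hgv hφ

end LaurentCoeff

/-- The polynomial `w (w - a)` in the shifted variable `w = z + 1`. The case `a = 1` is `z (1 + z)`,
and `a = α` is the base of the other power in `Psi` and `Phi`. -/
def quadFactor (a z : ℂ) : ℂ :=
  (z + 1) * (z + 1 - a)

section QuadFactor

variable {a z c : ℂ} {r : ℝ}

theorem differentiable_quadFactor (a : ℂ) : Differentiable ℂ (quadFactor a) := by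
  unfold quadFactor
  fun_prop

theorem continuous_quadFactor (a : ℂ) : Continuous (quadFactor a) :=
  (differentiable_quadFactor a).continuous

theorem deriv_quadFactor (a z : ℂ) : deriv (quadFactor a) z = 2 * z + 2 - a := by
  have hmul : HasDerivAt (quadFactor a) (1 * (z + 1 - a) + (z + 1) * 1) z :=
    ((hasDerivAt_id z).add_const 1).mul (((hasDerivAt_id z).add_const 1).sub_const a)
  rw [hmul.deriv]
  ring

theorem continuous_deriv_quadFactor (a : ℂ) : Continuous (deriv (quadFactor a)) := by
  simp only [funext (deriv_quadFactor a)]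
  fun_prop

theorem quadFactor_sub_quadFactor (a z c : ℂ) :
    quadFactor a z - quadFactor a c = (z - c) * (z + c + 2 - a) := by
  unfold quadFactor
  ring

theorem mul_one_add_eq_quadFactor_one (z : ℂ) : z * (1 + z) = quadFactor 1 z := by
  unfold quadFactor
  ring

theorem quadFactor_one_ne_zero_iff : quadFactor 1 z ≠ 0 ↔ z ≠ 0 ∧ z + 1 ≠ 0 := by
  simp [quadFactor, and_comm]

theorem isSoleSimpleZero_quadFactor_sub (hr : 0 < r) (hrc : r < ‖2 * c + 2 - a‖) :
    IsSoleSimpleZero (fun z => quadFactor a z - quadFactor a c) c r where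
  radius_pos := hr
  analyticOnNhd z _ := ((differentiable_quadFactor a).sub_const _).analyticAt z
  apply_center := sub_self _
  deriv_center_ne_zero := by
    rw [deriv_sub_const, deriv_quadFactor]
    exact norm_pos_iff.1 (hr.trans hrc)
  apply_ne_zero z hz hzc := by
    rw [quadFactor_sub_quadFactor]
    refine mul_ne_zero (sub_ne_zero.2 hzc) fun h0 => hrc.not_ge ?_
    have hcz : 2 * c + 2 - a = c - z := by linear_combination h0
    rwa [hcz, ← dist_eq_norm, dist_comm]

theorem isSoleSimpleZero_quadFactor (hr : 0 < r) (hra : r < ‖a‖) :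
    IsSoleSimpleZero (quadFactor a) (a - 1) r := by
  have hroot : quadFactor a (a - 1) = 0 := by simp [quadFactor]
  have hcenter : 2 * (a - 1) + 2 - a = a := by ring
  have hsub := isSoleSimpleZero_quadFactor_sub (c := a - 1) hr (hcenter.symm ▸ hra)
  simpa only [hroot, sub_zero] using hsub

theorem isSoleSimpleZero_quadFactor_one (hr : 0 < r) (hr1 : r < 1) :
    IsSoleSimpleZero (quadFactor 1) 0 r := by
  simpa using isSoleSimpleZero_quadFactor (a := 1) hr (by simpa using hr1)

end QuadFactor

/-- Radii `rv` and `rz` small enough that the circles in `Phi` (with `α = a`) enclose no singularity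
other than their centres. -/
structure SeparatedRadii (a : ℂ) (rv rz : ℝ) : Prop where
  rv_pos : 0 < rv
  rv_lt_norm : rv < ‖a‖
  rz_pos : 0 < rz
  rz_lt_one : rz < 1
  rz_lt_norm : ∀ v ∈ sphere (a - 1) rv, rz < ‖v‖
  rz_lt_norm_add_one : ∀ v ∈ sphere (a - 1) rv, rz < ‖v + 1‖
  rz_lt_norm_two_mul_add_one : ∀ v ∈ sphere (a - 1) rv, rz < ‖2 * v + 1‖

theorem exists_forall_separatedRadii {a : ℂ} (ha0 : a ≠ 0) (ha1 : a ≠ 1) :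
    ∃ ε > 0, ∀ rv rz : ℝ, 0 < rz → rz < rv → rv < ε → SeparatedRadii a rv rz := by
  obtain ⟨δ, hδ, hδa⟩ : ∃ δ > 0, 2 * a - 1 = 0 ∨ δ ≤ ‖2 * a - 1‖ := by
    rcases eq_or_ne (2 * a - 1) 0 with h | h
    · exact ⟨1, one_pos, .inl h⟩
    · exact ⟨‖2 * a - 1‖, norm_pos_iff.2 h, .inr le_rfl⟩
  have ha1' : 0 < ‖a - 1‖ := norm_pos_iff.2 (sub_ne_zero.2 ha1)
  refine ⟨min (min 1 (δ / 3)) (min (‖a‖ / 2) (‖a - 1‖ / 2)), by positivity,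
    fun rv rz hrz hrzv hrv => ?_⟩
  obtain ⟨⟨hrv1, hrvδ⟩, hrva, hrva1⟩ := by simpa only [lt_min_iff] using hrv
  have hdist {v : ℂ} (hv : v ∈ sphere (a - 1) rv) : ‖v - (a - 1)‖ = rv := mem_sphere_iff_norm.1 hv
  refine ⟨hrz.trans hrzv, by linarith, hrz, hrzv.trans hrv1, fun v hv => ?_, fun v hv => ?_,
    fun v hv => ?_⟩
  · linarith [hdist hv, norm_le_norm_add_norm_sub v (a - 1)]
  · have hshift : v + 1 - a = v - (a - 1) := by ring
    have htri := norm_le_norm_add_norm_sub (v + 1) a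
    rw [hshift, hdist hv] at htri
    linarith
  · have hshift : 2 * v + 1 - (2 * a - 1) = 2 * (v - (a - 1)) := by ring
    have hdist₂ : ‖2 * v + 1 - (2 * a - 1)‖ = 2 * rv := by simp [hshift, hdist hv]
    rcases hδa with h | h
    · rw [h, sub_zero] at hdist₂
      linarith
    · linarith [norm_le_norm_add_norm_sub (2 * v + 1) (2 * a - 1)]

namespace SeparatedRadii

variable {a v z : ℂ} {rv rz : ℝ}

theorem isSoleSimpleZero_outer (h : SeparatedRadii a rv rz) :
    IsSoleSimpleZero (quadFactor a) (a - 1) rv :=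
  isSoleSimpleZero_quadFactor h.rv_pos h.rv_lt_norm

theorem isSoleSimpleZero_inner_zero (h : SeparatedRadii a rv rz) :
    IsSoleSimpleZero (quadFactor 1) 0 rz :=
  isSoleSimpleZero_quadFactor_one h.rz_pos h.rz_lt_one

theorem isSoleSimpleZero_inner (h : SeparatedRadii a rv rz) (hv : v ∈ sphere (a - 1) rv) :
    IsSoleSimpleZero (fun z => quadFactor 1 z - quadFactor 1 v) v rz := by
  refine isSoleSimpleZero_quadFactor_sub h.rz_pos ?_
  have hderiv : 2 * v + 2 - 1 = 2 * v + 1 := by ring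
  exact hderiv ▸ h.rz_lt_norm_two_mul_add_one v hv

theorem quadFactor_one_ne_zero (h : SeparatedRadii a rv rz) (hv : v ∈ sphere (a - 1) rv)
    (hz : z ∈ closedBall v rz) : quadFactor 1 z ≠ 0 := by
  rw [mem_closedBall, dist_eq_norm] at hz
  refine quadFactor_one_ne_zero_iff.2 ⟨?_, fun hz1 => ?_⟩
  · rintro rfl
    rw [zero_sub, norm_neg] at hz
    exact (h.rz_lt_norm v hv).not_ge hz
  · rw [eq_neg_of_add_eq_zero_left hz1, ← neg_add', norm_neg, add_comm] at hz
    exact (h.rz_lt_norm_add_one v hv).not_ge hz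

theorem quadFactor_one_ne (h : SeparatedRadii a rv rz) (hv : v ∈ sphere (a - 1) rv)
    (hz : z ∈ closedBall 0 rz) : quadFactor 1 z ≠ quadFactor 1 v := by
  rw [mem_closedBall_zero_iff] at hz
  rw [← sub_ne_zero, quadFactor_sub_quadFactor]
  refine mul_ne_zero (sub_ne_zero.2 ?_) fun hzv => ?_
  · rintro rfl
    exact (h.rz_lt_norm z hv).not_ge hz
  · have hzv' : v + 1 = -z := by linear_combination hzv
    have hlt := h.rz_lt_norm_add_one v hv
    rw [hzv', norm_neg] at hlt
    exact hlt.not_ge hz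

end SeparatedRadii

/-- The entire function whose Laurent coefficients are the values of `Psi`. Its exponents are
natural numbers, so it has the intended meaning for `M ≤ n` and `k ≤ n`. -/
def psiSymbol (M : ℕ) (α : ℝ) (n k : ℕ) (t : ℝ) (w : ℂ) : ℂ :=
  Complex.exp (t * w) *
    if k ≤ M then (w * (w - 1)) ^ (n - M) * (w * (w - α)) ^ (M - k) else (w * (w - 1)) ^ (n - k)

/-- The factor common to the integrands of `Phi`, with the power of `1 + z` carrying the space
variable left out. -/
def phiWeight (M n : ℕ) (t : ℝ) (z : ℂ) : ℂ :=
  Complex.exp (-(t * (z + 1))) * quadFactor 1 z ^ ((M : ℤ) - n)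

/-- The factor `f' f ^ (j - M - 1)` of the integrand of `Phi`, where `f = quadFactor a`. It occurs
with `a = α` in the variable `v` if `j ≤ M`, and with `a = 1` otherwise. -/
def phiDifferential (M j : ℕ) (a z : ℂ) : ℂ :=
  deriv (quadFactor a) z * quadFactor a z ^ ((j : ℤ) - M - 1)

/-- The factor `(1 + 2z) / ((z - v) (z + v + 1))` of `phiLowInt`, written as the Cauchy kernel
`f' z / (f z - f v)` in the variable `f = quadFactor 1`. -/
def quadKernel (v z : ℂ) : ℂ :=
  deriv (quadFactor 1) z / (quadFactor 1 z - quadFactor 1 v)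

section Symbols

variable {M n k : ℕ} {α t : ℝ} {z : ℂ}

theorem differentiable_psiSymbol : Differentiable ℂ (psiSymbol M α n k t) := by
  unfold psiSymbol
  split_ifs <;> fun_prop

theorem Psi_eq_laurentCoeff (hn : M ≤ n) (hk : k ≤ n) (x : ℤ) :
    Psi M α n k t x = laurentCoeff (psiSymbol M α n k t) 2 (x + 2 * n - 2 * M) := by
  unfold Psi laurentCoeff psiSymbol
  split_ifs with hkM
  · simp only [← Nat.cast_sub hn, ← Nat.cast_sub hkM, zpow_natCast]
    congr! 3
    ring
  · simp only [← Nat.cast_sub hk, zpow_natCast]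
    congr! 3
    ring

theorem differentiableAt_phiWeight (hz : quadFactor 1 z ≠ 0) :
    DifferentiableAt ℂ (phiWeight M n t) z :=
  DifferentiableAt.mul (by fun_prop) ((differentiable_quadFactor 1 z).zpow (.inl hz))

theorem exp_mul_psiSymbol (M : ℕ) (α : ℝ) (n k : ℕ) (t : ℝ) (z : ℂ) :
    Complex.exp (-(t * (z + 1))) * psiSymbol M α n k t (1 + z) =
      if k ≤ M then quadFactor 1 z ^ (n - M) * quadFactor α z ^ (M - k)
      else quadFactor 1 z ^ (n - k) := by
  rw [psiSymbol, ← mul_assoc, ← Complex.exp_add, add_comm 1 z, neg_add_cancel, Complex.exp_zero,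
    one_mul, quadFactor, quadFactor]

theorem phiWeight_mul_psiSymbol_of_le (hn : M ≤ n) (hk : k ≤ M) (hz : quadFactor 1 z ≠ 0) :
    phiWeight M n t z * psiSymbol M α n k t (1 + z) = quadFactor α z ^ (M - k) := by
  rw [phiWeight, mul_right_comm, exp_mul_psiSymbol, if_pos hk, mul_right_comm, ← zpow_natCast,
    ← zpow_add₀ hz, Nat.cast_sub hn, sub_add_sub_cancel, sub_self, zpow_zero, one_mul]

theorem phiWeight_mul_psiSymbol_of_lt (hk : M < k) (hkn : k ≤ n) (hz : quadFactor 1 z ≠ 0) :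
    phiWeight M n t z * psiSymbol M α n k t (1 + z) = quadFactor 1 z ^ ((M : ℤ) - k) := by
  rw [phiWeight, mul_right_comm, exp_mul_psiSymbol, if_neg hk.not_ge, ← zpow_natCast,
    ← zpow_add₀ hz, Nat.cast_sub hkn, add_comm, sub_add_sub_cancel]

end Symbols

section Phi

variable {M n j k : ℕ} {α t rv rz r : ℝ} {a c v z : ℂ} {x : ℤ}

theorem continuousOn_phiWeight {s : Set ℂ} (hs : ∀ z ∈ s, quadFactor 1 z ≠ 0) :
    ContinuousOn (phiWeight M n t) s :=
  fun z hz => (differentiableAt_phiWeight (hs z hz)).continuousAt.continuousWithinAt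

theorem continuousOn_one_add_zpow {s : Set ℂ} (hs : ∀ z ∈ s, quadFactor 1 z ≠ 0) (y : ℤ) :
    ContinuousOn (fun z : ℂ => (1 + z) ^ y) s :=
  ContinuousOn.zpow₀ (by fun_prop) y fun z hz =>
    .inl (add_comm z 1 ▸ (quadFactor_one_ne_zero_iff.1 (hs z hz)).2)

theorem continuousOn_phiDifferential (h : IsSoleSimpleZero (quadFactor a) c r) :
    ContinuousOn (phiDifferential M j a) (sphere c r) :=
  (continuous_deriv_quadFactor a).continuousOn.mul (h.continuousOn_zpow _)

theorem circleIntegral_phiDifferential_mul_zpow (h : IsSoleSimpleZero (quadFactor a) c r) :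
    (∮ z in C(c, r), phiDifferential M j a z * quadFactor a z ^ ((M : ℤ) - k)) =
      if j = k then 2 * (π : ℂ) * I else 0 := by
  have hδ : (j : ℤ) - k - 1 = -1 ↔ j = k := by omega
  simp only [← hδ]
  rw [← h.circleIntegral_deriv_mul_zpow]
  refine circleIntegral.integral_congr h.radius_pos.le fun z hz => ?_
  simp only [phiDifferential, mul_assoc, ← zpow_add₀ (h.apply_ne_zero_of_mem_sphere hz)]
  congr 2
  ring

theorem phiLowInt_eq (M : ℕ) (α : ℝ) (n j : ℕ) (t : ℝ) (x : ℤ) (v z : ℂ) :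
    phiLowInt M α n j t x v z = phiDifferential M j α v * quadKernel v z * phiWeight M n t z *
      (1 + z) ^ (x + 2 * n - 2 * M : ℤ) := by
  have hexp : -((M : ℤ) - j + 1) = (j : ℤ) - M - 1 := by ring
  have hden : (z - v) * (z + v + 2 - 1) = (z - v) * (z + v + 1) := by ring
  rw [phiLowInt, phiDifferential, quadKernel, phiWeight, quadFactor_sub_quadFactor,
    deriv_quadFactor, deriv_quadFactor, hexp, hden,
    mul_one_add_eq_quadFactor_one, neg_sub, ← quadFactor]
  ring

theorem Phi_of_lt (hrz : 0 < rz) (hrz1 : rz < 1) (hj : M < j) :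
    Phi M α n j t rv rz x = (2 * (π : ℂ) * I)⁻¹ * ∮ z in C(0, rz),
      phiDifferential M j 1 z * phiWeight M n t z * (1 + z) ^ (x + 2 * n - 2 * M : ℤ) := by
  rw [Phi, if_neg hj.not_ge]
  congr 1
  refine circleIntegral.integral_congr hrz.le fun z hz => ?_
  have hz0 := (isSoleSimpleZero_quadFactor_one hrz hrz1).apply_ne_zero_of_mem_sphere hz
  have hexp : -((n : ℤ) - j + 1) = ((j : ℤ) - M - 1) + (M - n) := by ring
  simp only [phiDifferential, phiWeight, deriv_quadFactor, mul_one_add_eq_quadFactor_one, hexp,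
    zpow_add₀ hz0]
  ring

theorem hasSum_Phi_mul_Psi_of_lt (hrz : 0 < rz) (hrz1 : rz < 1) (hj : M < j) (hn : M ≤ n)
    (hk : k ≤ n) :
    HasSum (fun x : ℤ => Phi M α n j t rv rz x * Psi M α n k t x)
      ((2 * (π : ℂ) * I)⁻¹ * ∮ z in C(0, rz),
        phiDifferential M j 1 z * phiWeight M n t z * psiSymbol M α n k t (1 + z)) := by
  have hzero := isSoleSimpleZero_quadFactor_one hrz hrz1
  have hcont : ContinuousOn (fun z => phiDifferential M j 1 z * phiWeight M n t z)
      (sphere 0 rz) :=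
    (continuousOn_phiDifferential hzero).mul
      (continuousOn_phiWeight fun _ hz => hzero.apply_ne_zero_of_mem_sphere hz)
  have hmoment := (hasSum_laurentCoeff_mul_circleIntegral (φ := fun z => 1 + z)
    (differentiable_psiSymbol (M := M) (α := α) (n := n) (k := k) (t := t)) two_pos hrz.le hcont
    (by fun_prop)).mul_left (2 * (π : ℂ) * I)⁻¹
  simp only [mul_left_comm (2 * (π : ℂ) * I)⁻¹ (laurentCoeff _ _ _), ← zpow_natCast] at hmoment
  simp only [Phi_of_lt hrz hrz1 hj, Psi_eq_laurentCoeff hn hk, add_sub_assoc]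
  exact hasSum_mul_laurentCoeff_add (a := fun y => (2 * (π : ℂ) * I)⁻¹ * ∮ z in C(0, rz),
    phiDifferential M j 1 z * phiWeight M n t z * (1 + z) ^ y) differentiable_psiSymbol two_pos
    hmoment (2 * n - 2 * M)

theorem SeparatedRadii.continuousOn_quadKernel (h : SeparatedRadii a rv rz) :
    ContinuousOn (Function.uncurry quadKernel) (sphere (a - 1) rv ×ˢ closedBall 0 rz) := by
  have hu := continuous_quadFactor 1
  refine ContinuousOn.div ?_ ?_ fun p hp => sub_ne_zero.2 (h.quadFactor_one_ne hp.1 hp.2)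
  · exact ((continuous_deriv_quadFactor 1).comp continuous_snd).continuousOn
  · exact ((hu.comp continuous_snd).sub (hu.comp continuous_fst)).continuousOn

theorem SeparatedRadii.continuousOn_phiLowKernel (h : SeparatedRadii (α : ℂ) rv rz) :
    ContinuousOn
      (Function.uncurry fun v z => phiDifferential M j α v * quadKernel v z * phiWeight M n t z)
      (sphere ((α : ℂ) - 1) rv ×ˢ sphere 0 rz) := by
  have hv := (continuousOn_phiDifferential (M := M) (j := j) h.isSoleSimpleZero_outer).comp
    continuousOn_fst fun (p : ℂ × ℂ) (hp : p ∈ sphere ((α : ℂ) - 1) rv ×ˢ sphere 0 rz) => hp.1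
  have hz := (continuousOn_phiWeight (M := M) (n := n) (t := t) fun _ hz =>
    h.isSoleSimpleZero_inner_zero.apply_ne_zero_of_mem_sphere hz).comp
    continuousOn_snd fun (p : ℂ × ℂ) (hp : p ∈ sphere ((α : ℂ) - 1) rv ×ˢ sphere 0 rz) => hp.2
  exact (hv.mul (h.continuousOn_quadKernel.mono
    (Set.prod_mono_right sphere_subset_closedBall))).mul hz

theorem SeparatedRadii.continuousOn_phiDifferential_mul_phiWeight
    (h : SeparatedRadii (α : ℂ) rv rz) :
    ContinuousOn (fun v => phiDifferential M j α v * phiWeight M n t v)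
      (sphere ((α : ℂ) - 1) rv) :=
  (continuousOn_phiDifferential h.isSoleSimpleZero_outer).mul <| continuousOn_phiWeight
    fun _ hv => h.quadFactor_one_ne_zero hv (mem_closedBall_self h.rz_pos.le)

theorem SeparatedRadii.circleIntegral_phiLowInt (h : SeparatedRadii (α : ℂ) rv rz)
    (hv : v ∈ sphere ((α : ℂ) - 1) rv) :
    (∮ z in C(v, rz), phiLowInt M α n j t x v z) = 2 * (π : ℂ) * I *
      (phiDifferential M j α v * phiWeight M n t v * (1 + v) ^ (x + 2 * n - 2 * M : ℤ)) := by
  have hholo : DifferentiableOn ℂ (fun z => phiDifferential M j α v *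
      (phiWeight M n t z * (1 + z) ^ (x + 2 * n - 2 * M : ℤ))) (closedBall v rz) := fun z hz => by
    have hz0 := h.quadFactor_one_ne_zero hv hz
    have hz1 : 1 + z ≠ 0 := add_comm z 1 ▸ (quadFactor_one_ne_zero_iff.1 hz0).2
    exact (((differentiableAt_phiWeight hz0).mul
      (DifferentiableAt.zpow (by fun_prop) (.inl hz1))).const_mul _).differentiableWithinAt
  have hresidue := (h.isSoleSimpleZero_inner hv).circleIntegral_deriv_div_mul hholo
  simp only [deriv_sub_const] at hresidue
  rw [mul_assoc (phiDifferential M j α v), ← hresidue]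
  refine circleIntegral.integral_congr h.rz_pos.le fun z _ => ?_
  simp only [phiLowInt_eq, quadKernel]
  ring

theorem Phi_of_le (h : SeparatedRadii (α : ℂ) rv rz) (hj : j ≤ M) :
    Phi M α n j t rv rz x = (2 * (π : ℂ) * I)⁻¹ *
      ((∮ v in C((α : ℂ) - 1, rv), phiDifferential M j α v * phiWeight M n t v *
          (1 + v) ^ (x + 2 * n - 2 * M : ℤ)) +
        (2 * (π : ℂ) * I)⁻¹ * ∮ v in C((α : ℂ) - 1, rv), ∮ z in C(0, rz),
          phiDifferential M j α v * quadKernel v z * phiWeight M n t z *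
            (1 + z) ^ (x + 2 * n - 2 * M : ℤ)) := by
  have hintegrable_v : CircleIntegrable (fun v => phiDifferential M j α v * phiWeight M n t v *
      (1 + v) ^ (x + 2 * n - 2 * M : ℤ)) ((α : ℂ) - 1) rv :=
    (h.continuousOn_phiDifferential_mul_phiWeight.mul <| continuousOn_one_add_zpow (fun _ hv =>
      h.quadFactor_one_ne_zero hv (mem_closedBall_self h.rz_pos.le)) _).circleIntegrable
        h.rv_pos.le
  have hintegrable_zero : CircleIntegrable (fun v => (2 * (π : ℂ) * I)⁻¹ * ∮ z in C(0, rz),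
      phiDifferential M j α v * quadKernel v z * phiWeight M n t z *
        (1 + z) ^ (x + 2 * n - 2 * M : ℤ)) ((α : ℂ) - 1) rv := by
    have hpow := continuousOn_one_add_zpow (fun _ hz =>
      h.isSoleSimpleZero_inner_zero.apply_ne_zero_of_mem_sphere hz) (x + 2 * n - 2 * M)
    exact (continuousOn_const.mul <| continuousOn_circleIntegral h.rz_pos.le <|
      h.continuousOn_phiLowKernel.mul <|
        hpow.comp continuousOn_snd fun _ hp => hp.2).circleIntegrable h.rv_pos.le
  rw [Phi, if_pos hj]
  congr 1
  rw [← circleIntegral.integral_const_mul, ← circleIntegral.integral_add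
    hintegrable_v hintegrable_zero]
  refine circleIntegral.integral_congr h.rv_pos.le fun v hv => ?_
  simp only [h.circleIntegral_phiLowInt hv, mul_add, inv_mul_cancel_left₀ two_pi_I_ne_zero]
  simp only [phiLowInt_eq, add_comm]

theorem hasSum_Phi_mul_Psi_of_le (h : SeparatedRadii (α : ℂ) rv rz) (hj : j ≤ M) (hn : M ≤ n)
    (hk : k ≤ n) :
    HasSum (fun x : ℤ => Phi M α n j t rv rz x * Psi M α n k t x)
      ((2 * (π : ℂ) * I)⁻¹ *
        ((∮ v in C((α : ℂ) - 1, rv), phiDifferential M j α v * phiWeight M n t v *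
            psiSymbol M α n k t (1 + v)) +
          (2 * (π : ℂ) * I)⁻¹ * ∮ v in C((α : ℂ) - 1, rv), ∮ z in C(0, rz),
            phiDifferential M j α v * quadKernel v z * phiWeight M n t z *
              psiSymbol M α n k t (1 + z))) := by
  have hF := differentiable_psiSymbol (M := M) (α := α) (n := n) (k := k) (t := t)
  have hsingle := hasSum_laurentCoeff_mul_circleIntegral (φ := fun z => 1 + z) hF two_pos
    h.rv_pos.le (h.continuousOn_phiDifferential_mul_phiWeight (M := M) (j := j) (n := n) (t := t))
    (by fun_prop)
  have hdouble := hasSum_laurentCoeff_mul_circleIntegral_circleIntegral (φ := fun z => 1 + z) hF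
    two_pos h.rv_pos.le h.rz_pos.le
    (h.continuousOn_phiLowKernel (M := M) (j := j) (n := n) (t := t)) (by fun_prop)
  have hmoment := (hsingle.add (hdouble.mul_left (2 * (π : ℂ) * I)⁻¹)).mul_left
    (2 * (π : ℂ) * I)⁻¹
  simp only [mul_left_comm (2 * (π : ℂ) * I)⁻¹ (laurentCoeff _ _ _), ← mul_add,
    ← zpow_natCast] at hmoment
  simp only [Phi_of_le h hj, Psi_eq_laurentCoeff hn hk, add_sub_assoc]
  exact hasSum_mul_laurentCoeff_add (a := fun y => (2 * (π : ℂ) * I)⁻¹ *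
    ((∮ v in C((α : ℂ) - 1, rv), phiDifferential M j α v * phiWeight M n t v * (1 + v) ^ y) +
      (2 * (π : ℂ) * I)⁻¹ * ∮ v in C((α : ℂ) - 1, rv), ∮ z in C(0, rz),
        phiDifferential M j α v * quadKernel v z * phiWeight M n t z * (1 + z) ^ y)) hF two_pos
    hmoment (2 * n - 2 * M)

theorem hasSum_Phi_mul_Psi_of_lt_of_le (hrz : 0 < rz) (hrz1 : rz < 1) (hj : M < j) (hn : M ≤ n)
    (hk : k ≤ M) : HasSum (fun x : ℤ => Phi M α n j t rv rz x * Psi M α n k t x) 0 := by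
  convert hasSum_Phi_mul_Psi_of_lt hrz hrz1 hj hn (hk.trans hn) using 1
  have hzero := isSoleSimpleZero_quadFactor_one hrz hrz1
  have hholo : Differentiable ℂ fun z =>
      deriv (quadFactor 1) z * quadFactor 1 z ^ (j - M - 1) * quadFactor α z ^ (M - k) := by
    simp only [funext (deriv_quadFactor 1)]
    exact (Differentiable.mul (by fun_prop) ((differentiable_quadFactor 1).pow _)).mul
      ((differentiable_quadFactor α).pow _)
  have hint : (∮ z in C(0, rz),
      phiDifferential M j 1 z * phiWeight M n t z * psiSymbol M α n k t (1 + z)) = 0 := by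
    refine (circleIntegral.integral_congr hrz.le fun z hz => ?_).trans
      (hholo.diffContOnCl.circleIntegral_eq_zero hrz.le)
    have hexp : (j : ℤ) - M - 1 = (j - M - 1 : ℕ) := by omega
    simp only [mul_assoc, phiDifferential, hexp, zpow_natCast,
      phiWeight_mul_psiSymbol_of_le hn hk (hzero.apply_ne_zero_of_mem_sphere hz)]
  rw [hint, mul_zero]

theorem hasSum_Phi_mul_Psi_of_lt_of_lt (hrz : 0 < rz) (hrz1 : rz < 1) (hj : M < j) (hk : M < k)
    (hkn : k ≤ n) :
    HasSum (fun x : ℤ => Phi M α n j t rv rz x * Psi M α n k t x) (if j = k then 1 else 0) := by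
  convert hasSum_Phi_mul_Psi_of_lt hrz hrz1 hj (hk.le.trans hkn) hkn using 1
  have hzero := isSoleSimpleZero_quadFactor_one hrz hrz1
  have hint : (∮ z in C(0, rz),
      phiDifferential M j 1 z * phiWeight M n t z * psiSymbol M α n k t (1 + z)) =
        if j = k then 2 * (π : ℂ) * I else 0 := by
    rw [← circleIntegral_phiDifferential_mul_zpow (M := M) hzero]
    refine circleIntegral.integral_congr hrz.le fun z hz => ?_
    simp only [mul_assoc,
      phiWeight_mul_psiSymbol_of_lt hk hkn (hzero.apply_ne_zero_of_mem_sphere hz)]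
  rw [hint, mul_ite, inv_mul_cancel₀ two_pi_I_ne_zero, mul_zero]

theorem SeparatedRadii.circleIntegral_quadKernel_mul_of_le (h : SeparatedRadii (α : ℂ) rv rz)
    (hn : M ≤ n) (hk : k ≤ M) (hv : v ∈ sphere ((α : ℂ) - 1) rv) :
    (∮ z in C(0, rz), quadKernel v z * (phiWeight M n t z * psiSymbol M α n k t (1 + z))) = 0 := by
  refine (circleIntegral.integral_congr h.rz_pos.le fun z hz => ?_).trans
    (circleIntegral_deriv_div_sub_mul_eq_zero h.rz_pos.le
      h.isSoleSimpleZero_inner_zero.analyticOnNhd (fun _ => h.quadFactor_one_ne hv)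
      ((differentiable_quadFactor α).pow (M - k)).differentiableOn)
  simp only [quadKernel, Pi.pow_apply, phiWeight_mul_psiSymbol_of_le hn hk
    (h.isSoleSimpleZero_inner_zero.apply_ne_zero_of_mem_sphere hz)]

theorem SeparatedRadii.circleIntegral_quadKernel_mul_of_lt (h : SeparatedRadii (α : ℂ) rv rz)
    (hk : M < k) (hkn : k ≤ n) (hv : v ∈ sphere ((α : ℂ) - 1) rv) :
    (∮ z in C(0, rz), quadKernel v z * (phiWeight M n t z * psiSymbol M α n k t (1 + z))) =
      -(2 * π * I) * (phiWeight M n t v * psiSymbol M α n k t (1 + v)) := by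
  have hexp : (M : ℤ) - k = -(k - M - 1 : ℕ) - 1 := by omega
  rw [phiWeight_mul_psiSymbol_of_lt hk hkn
      (h.quadFactor_one_ne_zero hv (mem_closedBall_self h.rz_pos.le)), hexp,
    ← h.isSoleSimpleZero_inner_zero.circleIntegral_deriv_div_sub_mul_zpow_neg
      (fun _ => h.quadFactor_one_ne hv)]
  refine circleIntegral.integral_congr h.rz_pos.le fun z hz => ?_
  simp only [quadKernel, ← hexp, phiWeight_mul_psiSymbol_of_lt hk hkn
    (h.isSoleSimpleZero_inner_zero.apply_ne_zero_of_mem_sphere hz)]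

theorem hasSum_Phi_mul_Psi_of_le_of_le (h : SeparatedRadii (α : ℂ) rv rz) (hj : j ≤ M)
    (hn : M ≤ n) (hk : k ≤ M) :
    HasSum (fun x : ℤ => Phi M α n j t rv rz x * Psi M α n k t x) (if j = k then 1 else 0) := by
  convert hasSum_Phi_mul_Psi_of_le h hj hn (hk.trans hn) using 1
  have hsingle : (∮ v in C((α : ℂ) - 1, rv), phiDifferential M j α v * phiWeight M n t v *
      psiSymbol M α n k t (1 + v)) = if j = k then 2 * (π : ℂ) * I else 0 := by
    rw [← circleIntegral_phiDifferential_mul_zpow (M := M) h.isSoleSimpleZero_outer]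
    refine circleIntegral.integral_congr h.rv_pos.le fun v hv => ?_
    simp only [mul_assoc, ← Nat.cast_sub hk, zpow_natCast, phiWeight_mul_psiSymbol_of_le hn hk
      (h.quadFactor_one_ne_zero hv (mem_closedBall_self h.rz_pos.le))]
  have hdouble : (∮ v in C((α : ℂ) - 1, rv), ∮ z in C(0, rz), phiDifferential M j α v *
      quadKernel v z * phiWeight M n t z * psiSymbol M α n k t (1 + z)) = 0 := by
    refine (circleIntegral.integral_congr (g := fun _ => 0) h.rv_pos.le fun v hv => ?_).trans
      (by simp [circleIntegral])
    simp only [mul_assoc, circleIntegral.integral_const_mul,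
      h.circleIntegral_quadKernel_mul_of_le hn hk hv, mul_zero]
  rw [hsingle, hdouble, mul_zero, add_zero, mul_ite, inv_mul_cancel₀ two_pi_I_ne_zero, mul_zero]

theorem hasSum_Phi_mul_Psi_of_le_of_lt (h : SeparatedRadii (α : ℂ) rv rz) (hj : j ≤ M)
    (hk : M < k) (hkn : k ≤ n) :
    HasSum (fun x : ℤ => Phi M α n j t rv rz x * Psi M α n k t x) 0 := by
  convert hasSum_Phi_mul_Psi_of_le h hj (hk.le.trans hkn) hkn using 1
  have hdouble : (∮ v in C((α : ℂ) - 1, rv), ∮ z in C(0, rz), phiDifferential M j α v *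
      quadKernel v z * phiWeight M n t z * psiSymbol M α n k t (1 + z)) = -(2 * π * I) *
        ∮ v in C((α : ℂ) - 1, rv),
          phiDifferential M j α v * phiWeight M n t v * psiSymbol M α n k t (1 + v) := by
    rw [← circleIntegral.integral_const_mul]
    refine circleIntegral.integral_congr h.rv_pos.le fun v hv => ?_
    simp only [mul_assoc, circleIntegral.integral_const_mul,
      h.circleIntegral_quadKernel_mul_of_lt hk hkn hv, neg_mul, mul_neg]
    ring
  rw [hdouble, neg_mul, mul_neg, inv_mul_cancel_left₀ two_pi_I_ne_zero, add_neg_cancel, mul_zero]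

theorem hasSum_Phi_mul_Psi (h : SeparatedRadii (α : ℂ) rv rz) (hn : M ≤ n) (hk : k ≤ n) :
    HasSum (fun x : ℤ => Phi M α n j t rv rz x * Psi M α n k t x) (if j = k then 1 else 0) := by
  rcases le_or_gt j M with hj | hj <;> rcases le_or_gt k M with hkM | hkM
  · exact hasSum_Phi_mul_Psi_of_le_of_le h hj hn hkM
  · rw [if_neg (hj.trans_lt hkM).ne]
    exact hasSum_Phi_mul_Psi_of_le_of_lt h hj hkM hk
  · rw [if_neg (hkM.trans_lt hj).ne']
    exact hasSum_Phi_mul_Psi_of_lt_of_le h.rz_pos h.rz_lt_one hj hn hkM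
  · exact hasSum_Phi_mul_Psi_of_lt_of_lt h.rz_pos h.rz_lt_one hj hkM hk

end Phi

theorem orthogonality_case_n_ge_M_plus_one_general
    (M : ℕ) (α : ℝ) (hα0 : α ≠ 0) (hα1 : α ≠ 1) (t : ℝ) (n : ℕ) (hn : M ≤ n) (j k : ℕ)
    (hkn : k ≤ n) :
    ∃ ε > 0, ∀ rv rz : ℝ, 0 < rz → rz < rv → rv < ε →
      Summable (fun x : ℤ => ‖Phi M α n j t rv rz x * Psi M α n k t x‖) ∧
      (∑' x : ℤ, Phi M α n j t rv rz x * Psi M α n k t x) =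
        if j = k then 1 else 0 := by
  obtain ⟨ε, hε, hsep⟩ := exists_forall_separatedRadii (a := α) (by exact_mod_cast hα0)
    (by exact_mod_cast hα1)
  refine ⟨ε, hε, fun rv rz hrz hrzv hrv => ?_⟩
  have hsum := hasSum_Phi_mul_Psi (j := j) (t := t) (hsep rv rz hrz hrzv hrv) hn hkn
  exact ⟨hsum.summable.norm, hsum.tsum_eq⟩

/-- Orthogonality `∑_{x∈ℤ} Φ^{n,t}_{n-j}(x) Ψ^{n,t}_{n-k}(x) = δ_{j,k}` for `n ≥ M+1`
(absolute convergence included); in particular the sum vanishes when `j ≥ M+1, k ≤ M`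
and when `j ≤ M, k ≥ M+1`. -/
theorem orthogonality_case_n_ge_M_plus_one
    (M : ℕ) (hM : 1 ≤ M) (α : ℝ) (hα0 : 0 < α) (hα1 : α < 1)
    (t : ℝ) (ht : 0 ≤ t) (n : ℕ) (hn : M + 1 ≤ n) (j k : ℕ)
    (hj1 : 1 ≤ j) (hjn : j ≤ n) (hk1 : 1 ≤ k) (hkn : k ≤ n) :
    ∃ ε > 0, ∀ rv rz : ℝ, 0 < rz → rz < rv → rv < ε →
      Summable (fun x : ℤ => ‖Phi M α n j t rv rz x * Psi M α n k t x‖) ∧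
      (∑' x : ℤ, Phi M α n j t rv rz x * Psi M α n k t x) =
        if j = k then 1 else 0 :=
  orthogonality_case_n_ge_M_plus_one_general M α hα0.ne' hα1.ne t n (by omega) j k hkn
end
end

section
/- Let α > 0 be a real with α ≠ 1, n₁, n₂ ≥ 1 integers, t₁, t₂ ≥ 0 reals and x₁, x₂ ∈ ℤ. For each integer M ≥ 1 define K̂^{(2)}_M(x₁,x₂) := (1/(2πi))³ ∮ dv ∮ dz ∮ (dw/w) e^{t₁w}(w(w−1))^{n₁}(w(w−α))^{M} w^{−(x₁+2n₁+1)}·w · (1+z)^{x₂+2n₂} e^{−t₂(z+1)}(z(z+1))^{−n₂} ((v+1)(v+1−α))^{−M} (1+2z)(2v+2−α)/[(z−v)(z+v+1)(w−1−v)(w+1−α+v)], where the v-contour encloses exactly α−1, for each v the z-contour encloses exactly 0 and v, and for each v the w-contour encloses exactly 0 and α−1−v (this is the triple-integral kernel term for M slow particles evaluated at particle indices M+n₁ and M+n₂). Then lim_{M→∞} K̂^{(2)}_M(x₁,x₂) = −(1/(2πi))² ∮ dw ∮ dv e^{t₁w}(w−1)^{n₁} w^{−(x₁+n₁+1)} (1+v)^{x₂+n₂}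 e^{−t₂(v+1)} v^{−n₂} (1+2v)/((v+w+1−α)(w−v−α)), where the w-contour encloses exactly 0 and, for each w, the v-contour encloses exactly 0 and α−1−w. -/
open Complex Real MeasureTheory Filter

noncomputable section

/-- Integrand of the triple contour integral `K̂^{(2)}_M` (kernel term for `M` slow
particles, evaluated at particle indices `M+n₁`, `M+n₂`). -/
def K2Int (M : ℕ) (α : ℝ) (n₁ n₂ : ℕ) (t₁ t₂ : ℝ) (x₁ x₂ : ℤ) (v z w : ℂ) : ℂ :=
  Complex.exp ((t₁ : ℂ) * w) * (w * (w - 1)) ^ n₁ * (w * (w - (α : ℂ))) ^ M *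
    w ^ (-(x₁ + 2 * (n₁ : ℤ) + 1)) *
    (1 + z) ^ (x₂ + 2 * (n₂ : ℤ)) * Complex.exp (-((t₂ : ℂ) * (z + 1))) *
    (z * (z + 1)) ^ (-(n₂ : ℤ)) * ((v + 1) * (v + 1 - (α : ℂ))) ^ (-(M : ℤ)) *
    ((1 + 2 * z) * (2 * v + 2 - (α : ℂ))) /
    ((z - v) * (z + v + 1) * (w - 1 - v) * (w + 1 - (α : ℂ) + v))

/-- `K̂^{(2)}_M(x₁,x₂)`: the `v`-contour encloses exactly `α-1`, for each `v` the
`z`-contour encloses exactly `0` and `v`, and the `w`-contour encloses exactly `0`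
and `α-1-v`. -/
def K2hat (M : ℕ) (α : ℝ) (n₁ n₂ : ℕ) (t₁ t₂ : ℝ) (x₁ x₂ : ℤ) (rv rz rw : ℝ) : ℂ :=
  (2 * (π : ℂ) * I)⁻¹ * ∮ v in C((α : ℂ) - 1, rv),
    (2 * (π : ℂ) * I)⁻¹ *
      ((∮ z in C((0 : ℂ), rz), (2 * (π : ℂ) * I)⁻¹ *
          ((∮ w in C((0 : ℂ), rw), K2Int M α n₁ n₂ t₁ t₂ x₁ x₂ v z w) +
           (∮ w in C((α : ℂ) - 1 - v, rw), K2Int M α n₁ n₂ t₁ t₂ x₁ x₂ v z w))) +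
       (∮ z in C(v, rz), (2 * (π : ℂ) * I)⁻¹ *
          ((∮ w in C((0 : ℂ), rw), K2Int M α n₁ n₂ t₁ t₂ x₁ x₂ v z w) +
           (∮ w in C((α : ℂ) - 1 - v, rw), K2Int M α n₁ n₂ t₁ t₂ x₁ x₂ v z w))))

/-- Integrand of the limiting (`M = ∞`) double contour integral. -/
def KInfInt (α : ℝ) (n₁ n₂ : ℕ) (t₁ t₂ : ℝ) (x₁ x₂ : ℤ) (w v : ℂ) : ℂ :=
  Complex.exp ((t₁ : ℂ) * w) * (w - 1) ^ n₁ * w ^ (-(x₁ + (n₁ : ℤ) + 1)) *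
    (1 + v) ^ (x₂ + (n₂ : ℤ)) * Complex.exp (-((t₂ : ℂ) * (v + 1))) * v ^ (-(n₂ : ℤ)) *
    (1 + 2 * v) / ((v + w + 1 - (α : ℂ)) * (w - v - (α : ℂ)))

/-!
For `M ≥ x₁ + n₁ + 1` the factor `(w (w - α)) ^ M` removes the pole of `K2Int` at `w = 0`, so the
`w`-integral is the residue at `c = α - 1 - v`. There `w (w - α) = (v + 1) (v + 1 - α)`, so the
dependence on `M` cancels and the residue is `KInfInt` at `(c, z)`. The reflection `v ↦ α - 1 - v`
then turns `K2hat` into minus the limiting double integral: the kernel is eventually constant in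
`M`.

The two double integrals may be taken over circles of different radii. The residue of `KInfInt` at
`v = α - 1 - w` is holomorphic in `w` on a punctured disc, and near `v = 0` the integrand is
holomorphic on a product of punctured discs, so neither part depends on the radii.
-/

section CircleIntegral

open Set Metric Function

theorem continuous_circleMap_circleMap {X : Type*} [TopologicalSpace X] {f : ℂ → ℂ → X}
    {a b : ℂ} {R r : ℝ}
    (hf : ContinuousOn (uncurry f) (sphere a |R| ×ˢ sphere b |r|)) :
    Continuous fun p : ℝ × ℝ => f (circleMap a R p.1) (circleMap b r p.2) :=
  hf.comp_continuous (f := fun p : ℝ × ℝ => (circleMap a R p.1, circleMap b r p.2)) (by fun_prop)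
    fun p => ⟨circleMap_mem_sphere' a R p.1, circleMap_mem_sphere' b r p.2⟩

variable {E : Type*} [NormedAddCommGroup E] [NormedSpace ℂ E]

theorem circleIntegrable_circleIntegral {f : ℂ → ℂ → E} {a b : ℂ} {R r : ℝ}
    (hf : ContinuousOn (uncurry f) (sphere a |R| ×ˢ sphere b |r|)) :
    CircleIntegrable (fun w => ∮ z in C(b, r), f w z) a R := by
  have hcont : Continuous (uncurry fun θ φ =>
      (circleMap 0 r φ * I) • f (circleMap a R θ) (circleMap b r φ)) :=
    Continuous.smul (by fun_prop) (continuous_circleMap_circleMap hf)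
  simp only [CircleIntegrable, circleIntegral, deriv_circleMap]
  exact (intervalIntegral.continuous_parametric_intervalIntegral_of_continuous' hcont _
    _).intervalIntegrable _ _

theorem circleIntegral_swap {f : ℂ → ℂ → E} {a b : ℂ} {R r : ℝ}
    (hf : ContinuousOn (uncurry f) (sphere a |R| ×ˢ sphere b |r|)) :
    (∮ w in C(a, R), ∮ z in C(b, r), f w z) = ∮ z in C(b, r), ∮ w in C(a, R), f w z := by
  have hcont : Continuous (uncurry fun θ φ =>
      (circleMap 0 R θ * I) • (circleMap 0 r φ * I) • f (circleMap a R θ) (circleMap b r φ)) :=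
    Continuous.smul (by fun_prop) <| Continuous.smul (by fun_prop) <|
      continuous_circleMap_circleMap hf
  simp only [circleIntegral, deriv_circleMap, ← intervalIntegral.integral_smul]
  rw [intervalIntegral_intervalIntegral_swap]
  · simp only [smul_comm (circleMap 0 R _ * I)]
  · exact (hcont.continuousOn.integrableOn_compact (isCompact_uIcc.prod isCompact_uIcc)).mono_set
      (prod_mono uIoc_subset_uIcc uIoc_subset_uIcc)

theorem circleIntegral_neg_radius (f : ℂ → E) (c : ℂ) (R : ℝ) :
    (∮ z in C(c, -R), f z) = ∮ z in C(c, R), f z := by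
  have hper : Periodic (fun θ => deriv (circleMap c R) θ • f (circleMap c R θ)) (2 * π) := by
    intro θ
    simp only [deriv_circleMap, periodic_circleMap _ _ θ]
  have hshift := hper.intervalIntegral_add_eq π 0
  simp only [circleIntegral, deriv_circleMap, circleMap_neg_radius] at hshift ⊢
  rw [intervalIntegral.integral_comp_add_right fun θ => (circleMap 0 R θ * I) • f (circleMap c R θ)]
  simpa [add_comm] using hshift

theorem circleIntegral_comp_sub_left (f : ℂ → E) (a c : ℂ) (R : ℝ) :
    (∮ z in C(a, R), f (c - z)) = -∮ w in C(c - a, R), f w := by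
  have hmap (θ : ℝ) : c - circleMap a R θ = circleMap (c - a) (-R) θ := by
    simp only [circleMap]
    push_cast
    ring
  have hderiv (θ : ℝ) : deriv (circleMap a R) θ = -deriv (circleMap (c - a) (-R)) θ := by
    simp [deriv_circleMap, circleMap]
  rw [← circleIntegral_neg_radius f]
  simp only [circleIntegral, hmap, hderiv, neg_smul, intervalIntegral.integral_neg]

theorem circleIntegral_eq_of_differentiableOn_punctured_ball {f : ℂ → E} {c : ℂ} {r r' R : ℝ}
    (hf : DifferentiableOn ℂ f (ball c R \ {c})) (hr : r ∈ Ioo 0 R) (hr' : r' ∈ Ioo 0 R) :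
    (∮ z in C(c, r), f z) = ∮ z in C(c, r'), f z := by
  wlog hle : r' ≤ r generalizing r r'
  · exact (this hr' hr (le_of_not_ge hle)).symm
  refine circleIntegral_eq_of_differentiable_on_annulus_off_countable hr'.1 hle countable_empty
    (hf.continuousOn.mono fun z hz => ?_) fun z hz => hf.differentiableAt ?_
  · exact ⟨closedBall_subset_ball hr.2 hz.1, fun h => hz.2 (h ▸ mem_ball_self hr'.1)⟩
  · refine (isOpen_ball.sdiff isClosed_singleton).mem_nhds ⟨ball_subset_ball hr.2.le hz.1.1, ?_⟩
    exact fun h => hz.1.2 (h ▸ mem_closedBall_self hr'.1.le)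

theorem sphere_subset_punctured_ball {c : ℂ} {r R : ℝ} (hr : r ∈ Ioo 0 R) :
    sphere c r ⊆ ball c R \ {c} :=
  fun _ hz => ⟨sphere_subset_closedBall.trans (closedBall_subset_ball hr.2) hz,
    ne_of_mem_sphere hz hr.1.ne'⟩

theorem continuousOn_torus_of_differentiableOn_punctured_ball {f : ℂ → ℂ → E} {a b : ℂ}
    {r₁ r₂ R₁ R₂ : ℝ}
    (hf : DifferentiableOn ℂ (uncurry f) ((ball a R₁ \ {a}) ×ˢ (ball b R₂ \ {b})))
    (hr₁ : r₁ ∈ Ioo 0 R₁) (hr₂ : r₂ ∈ Ioo 0 R₂) :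
    ContinuousOn (uncurry f) (sphere a |r₁| ×ˢ sphere b |r₂|) := by
  rw [abs_of_pos hr₁.1, abs_of_pos hr₂.1]
  exact hf.continuousOn.mono
    (prod_mono (sphere_subset_punctured_ball hr₁) (sphere_subset_punctured_ball hr₂))

theorem circleIntegral_circleIntegral_eq_of_differentiableOn_punctured_ball {f : ℂ → ℂ → E}
    {a b : ℂ} {r₁ r₁' R₁ r₂ r₂' R₂ : ℝ}
    (hf : DifferentiableOn ℂ (uncurry f) ((ball a R₁ \ {a}) ×ˢ (ball b R₂ \ {b})))
    (hr₁ : r₁ ∈ Ioo 0 R₁) (hr₁' : r₁' ∈ Ioo 0 R₁) (hr₂ : r₂ ∈ Ioo 0 R₂) (hr₂' : r₂' ∈ Ioo 0 R₂) :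
    (∮ w in C(a, r₁), ∮ z in C(b, r₂), f w z) = ∮ w in C(a, r₁'), ∮ z in C(b, r₂'), f w z := by
  have hinner {w : ℂ} (hw : w ∈ sphere a r₁) :
      (∮ z in C(b, r₂), f w z) = ∮ z in C(b, r₂'), f w z :=
    circleIntegral_eq_of_differentiableOn_punctured_ball
      (hf.comp (f := fun z => (w, z)) (by fun_prop)
        fun _ hz => ⟨sphere_subset_punctured_ball hr₁ hw, hz⟩) hr₂ hr₂'
  have houter {z : ℂ} (hz : z ∈ sphere b r₂') :
      (∮ w in C(a, r₁), f w z) = ∮ w in C(a, r₁'), f w z :=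
    circleIntegral_eq_of_differentiableOn_punctured_ball
      (hf.comp (f := fun w => (w, z)) (by fun_prop)
        fun _ hw => ⟨hw, sphere_subset_punctured_ball hr₂' hz⟩) hr₁ hr₁'
  calc (∮ w in C(a, r₁), ∮ z in C(b, r₂), f w z)
      = ∮ w in C(a, r₁), ∮ z in C(b, r₂'), f w z :=
        circleIntegral.integral_congr hr₁.1.le fun _ hw => hinner hw
    _ = ∮ z in C(b, r₂'), ∮ w in C(a, r₁), f w z :=
        circleIntegral_swap (continuousOn_torus_of_differentiableOn_punctured_ball hf hr₁ hr₂')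
    _ = ∮ z in C(b, r₂'), ∮ w in C(a, r₁'), f w z :=
        circleIntegral.integral_congr hr₂'.1.le fun _ hz => houter hz
    _ = ∮ w in C(a, r₁'), ∮ z in C(b, r₂'), f w z :=
        (circleIntegral_swap
          (continuousOn_torus_of_differentiableOn_punctured_ball hf hr₁' hr₂')).symm

theorem circleIntegral_sub_inv_smul_eq_zero {f : ℂ → E} {c w : ℂ} {R : ℝ} (hR : 0 ≤ R)
    (hf : DifferentiableOn ℂ f (closedBall c R)) (hw : w ∉ closedBall c R) :
    (∮ z in C(c, R), (z - w)⁻¹ • f z) = 0 := by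
  have hinv : DifferentiableOn ℂ (fun z => (z - w)⁻¹) (closedBall c R) :=
    DifferentiableOn.fun_inv (by fun_prop) fun z hz => sub_ne_zero.2 (ne_of_mem_of_not_mem hz hw)
  exact ((hinv.smul hf).mono closure_ball_subset_closedBall).diffContOnCl.circleIntegral_eq_zero hR

end CircleIntegral

section Kernel

open Set Metric Function

/-- The `w`-dependent factor of the integrands, without the interaction terms. -/
def wFactor (n : ℕ) (t : ℝ) (x : ℤ) (w : ℂ) : ℂ :=
  Complex.exp (t * w) * (w - 1) ^ n * w ^ (-(x + n + 1))

/-- The factor of the integrands in the second variable (`z` in `K2Int`, `v` in `KInfInt`), without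
the interaction terms. -/
def vFactor (n : ℕ) (t : ℝ) (x : ℤ) (v : ℂ) : ℂ :=
  (1 + v) ^ (x + n) * Complex.exp (-(t * (v + 1))) * v ^ (-(n : ℤ))

/-- The factor `(w (w - α)) ^ M * wFactor n t x w` of `K2Int`, in which `w ^ M` is absorbed in the
power of `w`: this makes it holomorphic at `0` once `x + n + 1 ≤ M`. -/
def slowWFactor (M : ℕ) (α : ℝ) (n : ℕ) (t : ℝ) (x : ℤ) (w : ℂ) : ℂ :=
  (w - α) ^ M * wFactor n t (x - M) w

/-- The double contour integral of `KInfInt`, with the `w`-circle of radius `rw` around `0` and the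
`v`-circles of radius `rv` around `0` and `α - 1 - w`. -/
def KInf (α : ℝ) (n₁ n₂ : ℕ) (t₁ t₂ : ℝ) (x₁ x₂ : ℤ) (rw rv : ℝ) : ℂ :=
  (2 * (π : ℂ) * I)⁻¹ * ∮ w in C((0 : ℂ), rw),
    (2 * (π : ℂ) * I)⁻¹ *
      ((∮ v in C((0 : ℂ), rv), KInfInt α n₁ n₂ t₁ t₂ x₁ x₂ w v) +
       (∮ v in C((α : ℂ) - 1 - w, rv), KInfInt α n₁ n₂ t₁ t₂ x₁ x₂ w v))

/-- `3 * ε` is at most the distance between any two distinct points among `0`, `-1`, `-α`, `α - 1`.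
These are the poles of `KInfInt` in `v` for `w = 0`, and of `K2Int` in `z` for `v = α - 1`; for `w`
and `v` within `ε` of these values, distinct ones stay separated. -/
structure IsSmallRadius (α ε : ℝ) : Prop where
  pos : 0 < ε
  le_one : 3 * ε ≤ 1
  le_abs : 3 * ε ≤ |α|
  le_abs_sub_one : 3 * ε ≤ |α - 1|
  le_abs_one_sub_two_mul : α ≠ 1 / 2 → 3 * ε ≤ |1 - 2 * α|

theorem exists_isSmallRadius {α : ℝ} (hα0 : α ≠ 0) (hα1 : α ≠ 1) : ∃ ε, IsSmallRadius α ε := by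
  have hsmall {d : ℝ} (hd : 0 < d) : ∀ᶠ ε in nhdsWithin 0 (Ioi 0), 3 * ε ≤ d :=
    (eventually_nhdsWithin_of_eventually_nhds (eventually_lt_nhds (by positivity : 0 < d / 3))).mono
      fun _ hε => by linarith
  have hhalf : ∀ᶠ ε in nhdsWithin 0 (Ioi 0), α ≠ 1 / 2 → 3 * ε ≤ |1 - 2 * α| :=
    eventually_imp_distrib_left.2 fun h =>
      hsmall (abs_pos.2 fun h0 => h (by linarith))
  refine Eventually.exists (f := nhdsWithin (0 : ℝ) (Ioi 0)) ?_
  filter_upwards [self_mem_nhdsWithin, hsmall one_pos, hsmall (abs_pos.2 hα0),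
    hsmall (abs_pos.2 (sub_ne_zero.2 hα1)), hhalf] with ε h₀ h₁ h₂ h₃ h₄
  exact ⟨h₀, h₁, h₂, h₃, h₄⟩

theorem ne_ofReal_of_norm_lt_abs {u : ℂ} {a : ℝ} (h : ‖u‖ < |a|) : u ≠ a := by
  rintro rfl
  simp at h

variable {α ε r : ℝ} {n n₁ n₂ M : ℕ} {t t₁ t₂ : ℝ} {x x₁ x₂ : ℤ} {c u v w z : ℂ}

namespace IsSmallRadius

theorem ne_alpha (hε : IsSmallRadius α ε) (hu : ‖u‖ < 3 * ε) : u ≠ α :=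
  ne_ofReal_of_norm_lt_abs (hu.trans_le hε.le_abs)

theorem ne_alpha_sub_one (hε : IsSmallRadius α ε) (hu : ‖u‖ < 3 * ε) : u ≠ α - 1 := by
  simpa using ne_ofReal_of_norm_lt_abs (hu.trans_le hε.le_abs_sub_one)

theorem ne_one (hε : IsSmallRadius α ε) (hu : ‖u‖ < 3 * ε) : u ≠ 1 := by
  simpa using ne_ofReal_of_norm_lt_abs (a := 1) (by simpa using hu.trans_le hε.le_one)

theorem one_add_ne_zero (hε : IsSmallRadius α ε) (hu : ‖u‖ < 3 * ε) : 1 + u ≠ 0 := fun h =>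
  hε.ne_one (u := -u) (by rwa [norm_neg]) (by linear_combination -h)

theorem norm_lt_norm_two_mul_sub (hε : IsSmallRadius α ε) (hw : ‖w‖ < ε) (hw0 : w ≠ 0) :
    ‖w‖ < ‖2 * w - (2 * α - 1 : ℝ)‖ := by
  -- `2 * w - (2 * α - 1)` joins the poles `w - α` and `α - 1 - w` of `KInfInt`, which collide as
  -- `w → 0` exactly when `α = 1 / 2`.
  have hpos : 0 < ‖w‖ := norm_pos_iff.2 hw0
  have htwo : ‖2 * w‖ = 2 * ‖w‖ := by simp
  rcases eq_or_ne α (1 / 2) with rfl | hα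
  · have hzero : ((2 * (1 / 2) - 1 : ℝ) : ℂ) = 0 := by norm_num
    rw [hzero, sub_zero, htwo]
    linarith
  · have hsub := norm_sub_norm_le ((2 * α - 1 : ℝ) : ℂ) (2 * w)
    rw [norm_sub_rev, Complex.norm_real, Real.norm_eq_abs, abs_sub_comm] at hsub
    linarith [hε.le_abs_one_sub_two_mul hα]

end IsSmallRadius

theorem differentiableAt_wFactor (h : w ≠ 0 ∨ x + n + 1 ≤ 0) :
    DifferentiableAt ℂ (wFactor n t x) w := by
  have hpow : DifferentiableAt ℂ (fun w : ℂ => w ^ (-(x + n + 1))) w :=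
    differentiableAt_zpow.2 (h.imp_right neg_nonneg.2)
  unfold wFactor
  fun_prop

theorem differentiableAt_vFactor (hv : v ≠ 0) (hv' : 1 + v ≠ 0) :
    DifferentiableAt ℂ (vFactor n t x) v := by
  unfold vFactor
  fun_prop (disch := tauto)

theorem wFactor_ne_zero (hw0 : w ≠ 0) (hw1 : w ≠ 1) : wFactor n t x w ≠ 0 :=
  mul_ne_zero (mul_ne_zero (Complex.exp_ne_zero _) (pow_ne_zero _ (sub_ne_zero.2 hw1)))
    (zpow_ne_zero _ hw0)

theorem slowWFactor_eq (hw : w ≠ 0) :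
    slowWFactor M α n t x w = (w * (w - α)) ^ M * wFactor n t x w := by
  have hexp : -(x - M + n + 1) = (M : ℤ) + -(x + n + 1) := by ring
  rw [slowWFactor, wFactor, wFactor, hexp, zpow_add₀ hw, zpow_natCast, mul_pow]
  ring

theorem slowWFactor_ne_zero (hw0 : w ≠ 0) (hw1 : w ≠ 1) (hwα : w ≠ α) :
    slowWFactor M α n t x w ≠ 0 :=
  mul_ne_zero (pow_ne_zero _ (sub_ne_zero.2 hwα)) (wFactor_ne_zero hw0 hw1)

theorem differentiable_slowWFactor (hM : x + n + 1 ≤ M) :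
    Differentiable ℂ (slowWFactor M α n t x) := fun w =>
  DifferentiableAt.fun_mul (by fun_prop) (differentiableAt_wFactor (.inr (by linarith)))

theorem KInfInt_eq (w v : ℂ) : KInfInt α n₁ n₂ t₁ t₂ x₁ x₂ w v =
    wFactor n₁ t₁ x₁ w * vFactor n₂ t₂ x₂ v * (1 + 2 * v) /
      ((v + w + 1 - α) * (w - v - α)) := by
  simp only [KInfInt, wFactor, vFactor]
  ring

theorem differentiableOn_KInfInt (hε : IsSmallRadius α ε) :
    DifferentiableOn ℂ (uncurry (KInfInt α n₁ n₂ t₁ t₂ x₁ x₂))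
      ((ball 0 ε \ {0}) ×ˢ (ball 0 ε \ {0})) := by
  rintro ⟨w, v⟩ ⟨⟨hw, hw0⟩, hv, hv0⟩
  rw [mem_ball_zero_iff] at hw hv
  have hpos := hε.pos
  have hden₁ : v + w + 1 - α ≠ 0 := fun h =>
    hε.ne_alpha_sub_one (u := v + w) (by linarith [norm_add_le v w]) (by linear_combination h)
  have hden₂ : w - v - α ≠ 0 :=
    sub_ne_zero.2 (hε.ne_alpha (by linarith [norm_sub_le w v]))
  have hw' : DifferentiableAt ℂ (fun p : ℂ × ℂ => wFactor n₁ t₁ x₁ p.1) (w, v) :=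
    (differentiableAt_wFactor (.inl hw0)).comp (w, v) differentiableAt_fst
  have hv' : DifferentiableAt ℂ (fun p : ℂ × ℂ => vFactor n₂ t₂ x₂ p.2) (w, v) :=
    (differentiableAt_vFactor hv0 (hε.one_add_ne_zero (by linarith))).comp (w, v)
      differentiableAt_snd
  have hinv : DifferentiableAt ℂ
      (fun p : ℂ × ℂ => ((p.2 + p.1 + 1 - α) * (p.1 - p.2 - α))⁻¹) (w, v) :=
    DifferentiableAt.fun_inv (by fun_prop) (mul_ne_zero hden₁ hden₂)
  simp only [uncurry_def, KInfInt_eq, div_eq_mul_inv]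
  exact DifferentiableAt.differentiableWithinAt (by fun_prop)

theorem differentiableOn_wFactor_mul_vFactor (hε : IsSmallRadius α ε) :
    DifferentiableOn ℂ (fun w => wFactor n₁ t₁ x₁ w * vFactor n₂ t₂ x₂ (α - 1 - w))
      (ball 0 ε \ {0}) := by
  rintro w ⟨hw, hw0⟩
  rw [mem_ball_zero_iff] at hw
  have hw3 : ‖w‖ < 3 * ε := by linarith [norm_nonneg w]
  have hv : DifferentiableAt ℂ (vFactor n₂ t₂ x₂) (α - 1 - w) :=
    differentiableAt_vFactor (sub_ne_zero.2 (hε.ne_alpha_sub_one hw3).symm) fun h =>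
      hε.ne_alpha hw3 (by linear_combination -h)
  exact ((differentiableAt_wFactor (.inl hw0)).fun_mul
    (hv.comp w (by fun_prop))).differentiableWithinAt

theorem circleIntegral_KInfInt_residue (hε : IsSmallRadius α ε) (hr : 0 < r) (hrw : r < ‖w‖)
    (hw : ‖w‖ < ε) :
    (∮ v in C((α : ℂ) - 1 - w, r), KInfInt α n₁ n₂ t₁ t₂ x₁ x₂ w v) =
      -(2 * π * I) * (wFactor n₁ t₁ x₁ w * vFactor n₂ t₂ x₂ (α - 1 - w)) := by
  set c : ℂ := α - 1 - w with hc
  set f : ℂ → ℂ := fun v =>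
    wFactor n₁ t₁ x₁ w * vFactor n₂ t₂ x₂ v * (1 + 2 * v) / (w - v - α) with hf
  have hsplit (v : ℂ) : KInfInt α n₁ n₂ t₁ t₂ x₁ x₂ w v = (v - c)⁻¹ • f v := by
    rw [KInfInt_eq, hf, hc, smul_eq_mul, ← div_div, div_right_comm, inv_mul_eq_div]
    ring_nf
  have hfar {v : ℂ} (hv : v ∈ closedBall c r) : w - v - α ≠ 0 := fun h => by
    have hlt := hε.norm_lt_norm_two_mul_sub hw (norm_pos_iff.1 (hr.trans hrw))
    rw [mem_closedBall_iff_norm] at hv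
    have heq : v - c = 2 * w - (2 * α - 1 : ℝ) := by
      push_cast
      linear_combination -h - hc
    rw [← heq] at hlt
    linarith
  have hdiff : DifferentiableOn ℂ f (closedBall c r) := fun v hv => by
    have hnorm : ‖w - (v - c)‖ < 3 * ε := by
      rw [mem_closedBall_iff_norm] at hv
      linarith [norm_sub_le w (v - c), hε.pos]
    have hv' : DifferentiableAt ℂ (vFactor n₂ t₂ x₂) v :=
      differentiableAt_vFactor (fun h => hε.ne_alpha_sub_one hnorm (by linear_combination hc - h))
        fun h => hε.ne_alpha hnorm (by linear_combination hc - h)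
    have hinv : DifferentiableAt ℂ (fun v => (w - v - α)⁻¹) v :=
      DifferentiableAt.fun_inv (by fun_prop) (hfar hv)
    simp only [hf, div_eq_mul_inv]
    exact DifferentiableAt.differentiableWithinAt (by fun_prop)
  have hfc : f c = -(wFactor n₁ t₁ x₁ w * vFactor n₂ t₂ x₂ c) := by
    have hcancel : 1 + 2 * c = -(w - c - α) := by linear_combination hc
    simp only [hf]
    rw [hcancel, mul_neg, neg_div, mul_div_cancel_right₀ _ (hfar (mem_closedBall_self hr.le))]
  simp only [hsplit]
  rw [hdiff.circleIntegral_sub_inv_smul (mem_ball_self hr), hfc, smul_eq_mul]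
  ring

theorem circleIntegral_KInfInt_add_residue (hε : IsSmallRadius α ε) {R : ℝ} (hr : 0 < r)
    (hrR : r < R) (hR : R < ε) :
    (∮ w in C((0 : ℂ), R), (∮ v in C((0 : ℂ), r), KInfInt α n₁ n₂ t₁ t₂ x₁ x₂ w v) +
        ∮ v in C((α : ℂ) - 1 - w, r), KInfInt α n₁ n₂ t₁ t₂ x₁ x₂ w v) =
      (∮ w in C((0 : ℂ), R), ∮ v in C((0 : ℂ), r), KInfInt α n₁ n₂ t₁ t₂ x₁ x₂ w v) +
        -(2 * π * I) * ∮ w in C((0 : ℂ), R),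
          wFactor n₁ t₁ x₁ w * vFactor n₂ t₂ x₂ (α - 1 - w) := by
  have hR0 : 0 < R := hr.trans hrR
  rw [← circleIntegral.integral_const_mul, ← circleIntegral.integral_add]
  · refine circleIntegral.integral_congr hR0.le fun w hw => ?_
    rw [mem_sphere_zero_iff_norm] at hw
    simp only [circleIntegral_KInfInt_residue hε hr (hrR.trans_eq hw.symm) (hw.trans_lt hR)]
  · exact circleIntegrable_circleIntegral (continuousOn_torus_of_differentiableOn_punctured_ball
      (differentiableOn_KInfInt hε) ⟨hR0, hR⟩ ⟨hr, hrR.trans hR⟩)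
  · exact (((differentiableOn_wFactor_mul_vFactor hε).continuousOn.mono
      (sphere_subset_punctured_ball ⟨hR0, hR⟩)).const_mul _).circleIntegrable hR0.le

theorem KInf_eq_of_isSmallRadius (hε : IsSmallRadius α ε) {rw rv rw' rv' : ℝ} (hrv : 0 < rv)
    (hrvw : rv < rw) (hrw : rw < ε) (hrv' : 0 < rv') (hrvw' : rv' < rw') (hrw' : rw' < ε) :
    KInf α n₁ n₂ t₁ t₂ x₁ x₂ rw rv = KInf α n₁ n₂ t₁ t₂ x₁ x₂ rw' rv' := by
  have hw : rw ∈ Ioo 0 ε := ⟨hrv.trans hrvw, hrw⟩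
  have hw' : rw' ∈ Ioo 0 ε := ⟨hrv'.trans hrvw', hrw'⟩
  have hv : rv ∈ Ioo 0 ε := ⟨hrv, hrvw.trans hrw⟩
  have hv' : rv' ∈ Ioo 0 ε := ⟨hrv', hrvw'.trans hrw'⟩
  simp only [KInf, circleIntegral.integral_const_mul]
  rw [circleIntegral_KInfInt_add_residue hε hrv hrvw hrw,
    circleIntegral_KInfInt_add_residue hε hrv' hrvw' hrw',
    circleIntegral_circleIntegral_eq_of_differentiableOn_punctured_ball
      (differentiableOn_KInfInt hε) hw hw' hv hv',
    circleIntegral_eq_of_differentiableOn_punctured_ball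
      (differentiableOn_wFactor_mul_vFactor hε) hw hw']

theorem K2Int_eq (hw : w ≠ 0) (hz : 1 + z ≠ 0) : K2Int M α n₁ n₂ t₁ t₂ x₁ x₂ v z w =
    slowWFactor M α n₁ t₁ x₁ w * vFactor n₂ t₂ x₂ z * ((v + 1) * (v + 1 - α)) ^ (-(M : ℤ)) *
      ((1 + 2 * z) * (2 * v + 2 - α)) /
      ((z - v) * (z + v + 1) * (w - 1 - v) * (w + 1 - α + v)) := by
  have hpow_w : w ^ n₁ * w ^ (-(x₁ + 2 * (n₁ : ℤ) + 1)) = w ^ (-(x₁ + n₁ + 1)) := by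
    rw [← zpow_natCast, ← zpow_add₀ hw]
    ring_nf
  have hpow_z : (1 + z) ^ (x₂ + 2 * (n₂ : ℤ)) * (z + 1) ^ (-(n₂ : ℤ)) = (1 + z) ^ (x₂ + n₂) := by
    rw [add_comm z 1, ← zpow_add₀ hz]
    ring_nf
  rw [K2Int, slowWFactor_eq hw, wFactor, vFactor, mul_pow w (w - 1), mul_zpow z, ← hpow_w, ← hpow_z]
  ring

theorem K2Int_eq_KInfInt (hw : w ≠ 0) (hz : 1 + z ≠ 0) (hc0 : c ≠ 0) (hc1 : c ≠ 1) :
    K2Int M α n₁ n₂ t₁ t₂ x₁ x₂ (α - 1 - c) z w =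
      (w - c)⁻¹ * (slowWFactor M α n₁ t₁ x₁ w / slowWFactor M α n₁ t₁ x₁ c *
        ((2 * c - α) / (w + c - α)) * KInfInt α n₁ n₂ t₁ t₂ x₁ x₂ c z) := by
  have hslow : ((α - 1 - c + 1) * (α - 1 - c + 1 - α)) ^ (-(M : ℤ)) =
      wFactor n₁ t₁ x₁ c / slowWFactor M α n₁ t₁ x₁ c := by
    rw [slowWFactor_eq hc0, div_mul_cancel_right₀ (wFactor_ne_zero hc0 hc1), zpow_neg, zpow_natCast]
    ring_nf
  rw [K2Int_eq hw hz, KInfInt_eq, hslow,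
    show z - (α - 1 - c) = z + c + 1 - α by ring, show z + (α - 1 - c) + 1 = -(c - z - α) by ring,
    show w - 1 - (α - 1 - c) = w + c - α by ring, show w + 1 - α + (α - 1 - c) = w - c by ring]
  simp only [div_eq_mul_inv, mul_inv, inv_neg]
  ring

theorem circleIntegral_K2Int (hε : IsSmallRadius α ε) (hM : x₁ + n₁ + 1 ≤ M) (hr : 0 < r)
    (hrv : r < ‖α - 1 - v‖) (hv : ‖α - 1 - v‖ < ε) (hz : 1 + z ≠ 0) :
    (∮ w in C((0 : ℂ), r), K2Int M α n₁ n₂ t₁ t₂ x₁ x₂ v z w) +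
        (∮ w in C((α : ℂ) - 1 - v, r), K2Int M α n₁ n₂ t₁ t₂ x₁ x₂ v z w) =
      2 * π * I * KInfInt α n₁ n₂ t₁ t₂ x₁ x₂ (α - 1 - v) z := by
  obtain ⟨c, rfl⟩ : ∃ c : ℂ, v = α - 1 - c := ⟨α - 1 - v, by ring⟩
  rw [sub_sub_cancel] at hrv hv ⊢
  set f : ℂ → ℂ := fun w => slowWFactor M α n₁ t₁ x₁ w / slowWFactor M α n₁ t₁ x₁ c *
    ((2 * c - α) / (w + c - α)) * KInfInt α n₁ n₂ t₁ t₂ x₁ x₂ c z with hf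
  have hc0 : c ≠ 0 := norm_pos_iff.1 (hr.trans hrv)
  have hc1 : c ≠ 1 := hε.ne_one (by linarith [hε.pos])
  have hcα : c ≠ α := hε.ne_alpha (by linarith [hε.pos])
  have hfar {w : ℂ} (hw : ‖w‖ < 2 * ε) : w + c - α ≠ 0 :=
    sub_ne_zero.2 (hε.ne_alpha (by linarith [norm_add_le w c]))
  have hdiff {s : Set ℂ} (hs : ∀ w ∈ s, ‖w‖ < 2 * ε) : DifferentiableOn ℂ f s := by
    have hslow := differentiable_slowWFactor (α := α) (t := t₁) hM
    have hinv : DifferentiableOn ℂ (fun w => (2 * c - α) / (w + c - α)) s :=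
      DifferentiableOn.fun_div (by fun_prop) (by fun_prop) fun w hw => hfar (hs w hw)
    exact ((hslow.differentiableOn.div_const _).fun_mul hinv).mul_const _
  have hsplit {a : ℂ} (ha : (0 : ℂ) ∉ sphere a r) :
      (∮ w in C(a, r), K2Int M α n₁ n₂ t₁ t₂ x₁ x₂ (α - 1 - c) z w) =
        ∮ w in C(a, r), (w - c)⁻¹ • f w :=
    circleIntegral.integral_congr hr.le fun w hw =>
      K2Int_eq_KInfInt (ne_of_mem_of_not_mem hw ha) hz hc0 hc1
  have hfc : f c = KInfInt α n₁ n₂ t₁ t₂ x₁ x₂ c z := by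
    simp only [hf]
    rw [two_mul, div_self (slowWFactor_ne_zero hc0 hc1 hcα),
      div_self (hfar (by linarith [hε.pos])), one_mul, one_mul]
  rw [hsplit (by simpa using hr.ne), hsplit (by simpa using hrv.ne'),
    circleIntegral_sub_inv_smul_eq_zero hr.le (hdiff fun w hw => ?_) (by simpa using hrv),
    (hdiff fun w hw => ?_).circleIntegral_sub_inv_smul (mem_ball_self hr), hfc, zero_add,
    smul_eq_mul]
  · rw [mem_closedBall_iff_norm] at hw
    linarith [norm_le_norm_add_norm_sub' w c]
  · rw [mem_closedBall_zero_iff] at hw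
    linarith [hε.pos]

theorem K2hat_eq_neg_KInf (hε : IsSmallRadius α ε) (hM : x₁ + n₁ + 1 ≤ M) {rv rz rw : ℝ}
    (hrz : 0 < rz) (hrzv : rz < rv) (hrw : 0 < rw) (hrwv : rw < rv) (hrv : rv < ε) :
    K2hat M α n₁ n₂ t₁ t₂ x₁ x₂ rv rz rw = -KInf α n₁ n₂ t₁ t₂ x₁ x₂ rv rz := by
  have hreflect := circleIntegral_comp_sub_left (fun c : ℂ => (2 * (π : ℂ) * I)⁻¹ *
    ((∮ z in C((0 : ℂ), rz), KInfInt α n₁ n₂ t₁ t₂ x₁ x₂ c z) +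
      ∮ z in C((α : ℂ) - 1 - c, rz), KInfInt α n₁ n₂ t₁ t₂ x₁ x₂ c z)) (α - 1) (α - 1) rv
  simp only [sub_self, sub_sub_cancel] at hreflect
  rw [KInf, ← mul_neg, ← hreflect, K2hat]
  congr 1
  refine circleIntegral.integral_congr (hrz.trans hrzv).le fun v hv => ?_
  rw [mem_sphere_iff_norm, norm_sub_rev] at hv
  have hw_integral {a : ℂ} (ha : ∀ z ∈ sphere a rz, 1 + z ≠ 0) :
      (∮ z in C(a, rz), (2 * (π : ℂ) * I)⁻¹ *
        ((∮ w in C((0 : ℂ), rw), K2Int M α n₁ n₂ t₁ t₂ x₁ x₂ v z w) +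
          ∮ w in C((α : ℂ) - 1 - v, rw), K2Int M α n₁ n₂ t₁ t₂ x₁ x₂ v z w)) =
        ∮ z in C(a, rz), KInfInt α n₁ n₂ t₁ t₂ x₁ x₂ (α - 1 - v) z :=
    circleIntegral.integral_congr hrz.le fun z hz => by
      simp only [circleIntegral_K2Int hε hM hrw (hrwv.trans_eq hv.symm) (hv.trans_lt hrv) (ha z hz),
        inv_mul_cancel_left₀ two_pi_I_ne_zero]
  rw [hw_integral fun z hz => ?_, hw_integral fun z hz => ?_]
  · rw [mem_sphere_iff_norm] at hz
    refine fun h => hε.ne_alpha (u := α - 1 - v - (z - v)) ?_ (by linear_combination -h)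
    linarith [norm_sub_le (α - 1 - v) (z - v)]
  · rw [mem_sphere_zero_iff_norm] at hz
    exact hε.one_add_ne_zero (by linarith)

end Kernel

theorem K2hat_limit_M_infinity_general
    (α : ℝ) (hα0 : α ≠ 0) (hα1 : α ≠ 1) (n₁ n₂ : ℕ) (t₁ t₂ : ℝ) (x₁ x₂ : ℤ) :
    ∃ ε > 0, ∀ rv rz rw rw' rv' : ℝ,
      0 < rz → rz < rv → 0 < rw → rw < rv → rv < ε →
      0 < rv' → rv' < rw' → rw' < ε →
      ∀ M : ℕ, x₁ + n₁ + 1 ≤ M →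
        K2hat M α n₁ n₂ t₁ t₂ x₁ x₂ rv rz rw = -KInf α n₁ n₂ t₁ t₂ x₁ x₂ rw' rv' := by
  obtain ⟨ε, hε⟩ := exists_isSmallRadius hα0 hα1
  refine ⟨ε, hε.pos, fun rv rz rw rw' rv' hrz hrzv hrw hrwv hrv hrv' hrvw' hrw' M hM => ?_⟩
  rw [K2hat_eq_neg_KInf hε hM hrz hrzv hrw hrwv hrv,
    KInf_eq_of_isSmallRadius hε hrz hrzv hrv hrv' hrvw' hrw']

/-- `lim_{M→∞} K̂^{(2)}_M(x₁,x₂)` equals the double contour integral, where the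
`w`-contour encloses exactly `0` and, for each `w`, the `v`-contour encloses exactly
`0` and `α-1-w`. -/
theorem K2hat_limit_M_infinity
    (α : ℝ) (hα0 : 0 < α) (hα1 : α ≠ 1)
    (n₁ n₂ : ℕ) (hn₁ : 1 ≤ n₁) (hn₂ : 1 ≤ n₂)
    (t₁ t₂ : ℝ) (ht₁ : 0 ≤ t₁) (ht₂ : 0 ≤ t₂) (x₁ x₂ : ℤ) :
    ∃ ε > 0, ∀ rv rz rw rw' rv' : ℝ,
      0 < rz → rz < rv → 0 < rw → rw < rv → rv < ε →
      0 < rv' → rv' < rw' → rw' < ε →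
      Tendsto (fun M : ℕ => K2hat M α n₁ n₂ t₁ t₂ x₁ x₂ rv rz rw) atTop
        (nhds (-((2 * (π : ℂ) * I)⁻¹ * ∮ w in C((0 : ℂ), rw'),
            (2 * (π : ℂ) * I)⁻¹ *
              ((∮ v in C((0 : ℂ), rv'), KInfInt α n₁ n₂ t₁ t₂ x₁ x₂ w v) +
               (∮ v in C((α : ℂ) - 1 - w, rv'), KInfInt α n₁ n₂ t₁ t₂ x₁ x₂ w v))))) := by
  obtain ⟨ε, hε, h⟩ := K2hat_limit_M_infinity_general α hα0.ne' hα1 n₁ n₂ t₁ t₂ x₁ x₂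
  refine ⟨ε, hε, fun rv rz rw rw' rv' h₁ h₂ h₃ h₄ h₅ h₆ h₇ h₈ => tendsto_const_nhds.congr' ?_⟩
  filter_upwards [eventually_ge_atTop (x₁ + n₁ + 1).toNat] with M hM
  exact (h rv rz rw rw' rv' h₁ h₂ h₃ h₄ h₅ h₆ h₇ h₈ M (Int.toNat_le.1 hM)).symm
end
end

section
/- Let 0 < α < 1/2, η ∈ ℝ and ξ > 0 be reals. For t > 0 set n(t) := ⌊(1−α)t/2 + η t^{1/2}⌋ and x(t) := ⌊t/2 − ξ t^{1/2}⌋ − 2n(t), and define I(t) := (1/(2πi)) ∮ dw e^{t(w−α)} ((w−1)α/((α−1)w))^{n(t)−1} (α/w)^{x(t)} / (w−α), the contour being any positively oriented circle centered at 0 of radius r > α (equivalently, a contour enclosing exactly the points 0 and α; the value is independent of r > α). Then lim_{t→∞} I(t) = (1/√(2πσ²)) ∫_{−∞}^{ξ+ξ_c} e^{−y²/(2σ²)} dy, where σ² := α(1−2α)/(2(1−α)) and ξ_c := (1−2α)η/(1−α). -/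
open Complex Real MeasureTheory Filter

noncomputable section

/-- The contour integral `I(t)` (rank-one part of the modified shock kernel paired with
the indicator of `{y ≥ x(t)}`), over a circle of radius `r > α` centered at `0`. -/
def shockInt (α : ℝ) (η ξ : ℝ) (r : ℝ) (t : ℝ) : ℂ :=
  (2 * (π : ℂ) * I)⁻¹ * ∮ w in C((0 : ℂ), r),
    Complex.exp ((t : ℂ) * (w - (α : ℂ))) *
      ((w - 1) * (α : ℂ) / (((α : ℝ) - 1 : ℝ) * w)) ^ (⌊(1 - α) * t / 2 + η * Real.sqrt t⌋ - 1) *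
      ((α : ℂ) / w) ^ (⌊t / 2 - ξ * Real.sqrt t⌋ - 2 * ⌊(1 - α) * t / 2 + η * Real.sqrt t⌋) *
      (w - (α : ℂ))⁻¹

/-- The limiting Gaussian probability `(2πσ²)^{-1/2} ∫_{-∞}^{ξ+ξ_c} e^{-y²/(2σ²)} dy`
with `σ² = α(1-2α)/(2(1-α))` and `ξ_c = (1-2α)η/(1-α)`. -/
def gaussLimit (α η ξ : ℝ) : ℝ :=
  (Real.sqrt (2 * π * (α * (1 - 2 * α) / (2 * (1 - α)))))⁻¹ *
    ∫ y in Set.Iic (ξ + (1 - 2 * α) * η / (1 - α)),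
      Real.exp (-y ^ 2 / (2 * (α * (1 - 2 * α) / (2 * (1 - α)))))

/-! The saddle point of the exponent lies at distance of order `t^{-1/2}` from the pole `w = α`.
Shrink the contour to the circle of radius `α e^{1/√t}` and write `w = α e^{z/√t}` with
`z = 1 + iu`. Taylor expansion to second order turns the regular part of the integrand into
`e^{σ²z²/2 + bz}` with `b = ξ + ξ_c`, and `dw / (w - α)` into `dz / z`. Away from the real axis the
integrand decays along the circle, and Jordan's inequality makes this decay Gaussian in `u`,
uniformly in `t`, so dominated convergence applies. Writing `1/z = ∫₀^∞ e^{-yz} dy` identifies the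
limit as the Gaussian distribution function at `b`. -/

open Asymptotics ProbabilityTheory Set
open scoped NNReal Topology

section TaylorScaling

lemma tendsto_pow_mul_comp_of_isLittleO {𝕜 ι : Type*} [NormedField 𝕜] {l : Filter ι} {f : 𝕜 → 𝕜}
    {a z : 𝕜} {n : ℕ} {s y : ι → 𝕜} (hf : (fun x => f x - a * x ^ n) =o[𝓝 0] fun x => x ^ n)
    (hy : Tendsto y l (𝓝 0)) (hsy : Tendsto (fun i => s i * y i) l (𝓝 z)) :
    Tendsto (fun i => s i ^ n * f (y i)) l (𝓝 (a * z ^ n)) := by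
  have hbounded : (fun i => s i ^ n * y i ^ n) =O[l] fun _ => (1 : ℝ) := by
    simpa only [mul_pow] using (hsy.pow n).isBigO_one ℝ
  have herror : Tendsto (fun i => s i ^ n * (f (y i) - a * y i ^ n)) l (𝓝 0) :=
    (isLittleO_one_iff ℝ).1 <|
      ((isBigO_refl (fun i => s i ^ n) l).mul_isLittleO (hf.comp_tendsto hy)).trans_isBigO hbounded
  have hmain : Tendsto (fun i => a * (s i * y i) ^ n) l (𝓝 (a * z ^ n)) := (hsy.pow n).const_mul a
  rw [← zero_add (a * z ^ n)]
  exact (herror.add hmain).congr fun i => by ring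

variable {ι : Type*} {l : Filter ι} {s y : ι → ℂ} {z : ℂ}

lemma tendsto_mul_exp_sub_one (hy : Tendsto y l (𝓝 0))
    (hsy : Tendsto (fun i => s i * y i) l (𝓝 z)) :
    Tendsto (fun i => s i * (cexp (y i) - 1)) l (𝓝 z) := by
  have hexp : (fun x : ℂ => cexp x - 1 - 1 * x ^ 1) =o[𝓝 0] fun x => x ^ 1 := by
    refine (Complex.exp_sub_sum_range_succ_isLittleO_pow 1).congr_left fun x => ?_
    simp only [Finset.sum_range_succ, Finset.sum_range_zero, Nat.factorial]
    push_cast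
    ring
  simpa only [pow_one, one_mul] using tendsto_pow_mul_comp_of_isLittleO hexp hy hsy

lemma tendsto_sq_mul_exp_sub_one_sub (hy : Tendsto y l (𝓝 0))
    (hsy : Tendsto (fun i => s i * y i) l (𝓝 z)) :
    Tendsto (fun i => s i ^ 2 * (cexp (y i) - 1 - y i)) l (𝓝 (1 / 2 * z ^ 2)) := by
  have hexp : (fun x : ℂ => cexp x - 1 - x - 1 / 2 * x ^ 2) =o[𝓝 0] fun x => x ^ 2 := by
    refine (Complex.exp_sub_sum_range_succ_isLittleO_pow 2).congr_left fun x => ?_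
    simp only [Finset.sum_range_succ, Finset.sum_range_zero, Nat.factorial]
    push_cast
    ring
  exact tendsto_pow_mul_comp_of_isLittleO hexp hy hsy

lemma tendsto_sq_mul_log_one_add_sub (hy : Tendsto y l (𝓝 0))
    (hsy : Tendsto (fun i => s i * y i) l (𝓝 z)) :
    Tendsto (fun i => s i ^ 2 * (Complex.log (1 + y i) - y i)) l (𝓝 (-1 / 2 * z ^ 2)) := by
  have hlog : (fun x : ℂ => Complex.log (1 + x) - x - -1 / 2 * x ^ 2) =o[𝓝 0] fun x => x ^ 2 := by
    refine ((Complex.log_sub_logTaylor_isBigO 2).congr_left fun x => ?_).trans_isLittleO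
      (isLittleO_pow_pow (Nat.lt_succ_self 2))
    simp only [Complex.logTaylor, Finset.sum_range_succ, Finset.sum_range_zero]
    push_cast
    ring
  exact tendsto_pow_mul_comp_of_isLittleO hlog hy hsy

lemma tendsto_fract_div_atTop {f S : ι → ℝ} (hS : Tendsto S l atTop) :
    Tendsto (fun i => Int.fract (f i) / S i) l (𝓝 0) :=
  tendsto_bdd_div_atTop_nhds_zero (.of_forall fun _ => Int.fract_nonneg _)
    (.of_forall fun _ => (Int.fract_lt_one _).le) hS

end TaylorScaling

section GaussianIntegral

variable {v : ℝ≥0}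

lemma cdf_gaussianReal (hv : v ≠ 0) (μ b : ℝ) :
    cdf (gaussianReal μ v) b = ∫ y in Iic b, gaussianPDFReal μ v y := by
  rw [cdf_eq_real, measureReal_def, gaussianReal_apply_eq_integral μ hv, ENNReal.toReal_ofReal]
  exact integral_nonneg fun y => gaussianPDFReal_nonneg μ v y

lemma setIntegral_Ioi_comp_sub_left {E : Type*} [NormedAddCommGroup E] [NormedSpace ℝ E]
    (f : ℝ → E) (a b : ℝ) : ∫ y in Ioi a, f (b - y) = ∫ y in Iic (b - a), f y := by
  have hpreimage : (fun y => b - y) ⁻¹' Iio (b - a) = Ioi a := by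
    rw [preimage_const_sub_Iio, sub_sub_cancel]
  rw [integral_Iic_eq_integral_Iio, ← hpreimage]
  exact (volume.measurePreserving_sub_left b).setIntegral_preimage_emb
    (MeasurableEquiv.subLeft b).measurableEmbedding f _

lemma integral_cexp_verticalLine (hv : v ≠ 0) (c x : ℝ) :
    ∫ u : ℝ, cexp (v * (c + u * I) ^ 2 / 2 + x * (c + u * I)) =
      2 * π * gaussianPDFReal 0 v x := by
  have hv' : (0 : ℝ) < v := by positivity
  have hvc : (v : ℂ) ≠ 0 := by exact_mod_cast hv'.ne'
  have hexpand (u : ℝ) : (v * (c + u * I) ^ 2 / 2 + x * (c + u * I) : ℂ) =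
      -(v / 2 : ℂ) * u ^ 2 + I * (v * c + x) * u + (v * c ^ 2 / 2 + x * c) := by
    linear_combination (v * u ^ 2 / 2 : ℂ) * I_sq
  have hnormalisation : √(2 * π / v) = 2 * π * (√(2 * π * v))⁻¹ := by
    rw [Real.sqrt_eq_iff_eq_sq (by positivity) (by positivity), mul_pow, inv_pow,
      Real.sq_sqrt (by positivity)]
    field_simp
  have hpow : (π / -(-(v / 2) : ℂ)) ^ (1 / 2 : ℂ) = √(2 * π / v) := by
    rw [neg_neg, Real.sqrt_eq_rpow, Complex.ofReal_cpow (by positivity)]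
    push_cast
    congr 1
    field_simp
  simp_rw [hexpand]
  rw [integral_cexp_quadratic (by simpa using hv'), hpow, hnormalisation, gaussianPDFReal]
  push_cast
  rw [← mul_assoc]
  congr 2
  rw [mul_pow, I_sq]
  field_simp
  ring

lemma integrable_cexp_verticalLine_prod_Ioi (hv : v ≠ 0) (b : ℝ) {c : ℝ} (hc : 0 < c) :
    Integrable (fun p : ℝ × ℝ => cexp (v * (c + p.1 * I) ^ 2 / 2 + (b - p.2) * (c + p.1 * I)))
      (volume.prod (volume.restrict (Ioi 0))) := by
  have hu : Integrable fun u : ℝ => rexp (-(v / 2) * u ^ 2) * rexp (v * c ^ 2 / 2 + b * c) :=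
    (integrable_exp_neg_mul_sq (by positivity)).mul_const _
  have hy : Integrable (fun y : ℝ => rexp (-c * y)) (volume.restrict (Ioi 0)) :=
    exp_neg_integrableOn_Ioi 0 hc
  refine (hu.mul_prod hy).mono (by fun_prop) (.of_forall fun p => le_of_eq ?_)
  simp only [Complex.norm_exp, Real.norm_eq_abs, Real.abs_exp, ← Real.exp_add]
  congr 1
  simp only [pow_two, add_re, div_ofNat_re, mul_re, ofReal_re, I_re, mul_zero, ofReal_im, I_im,
    mul_one, sub_self, add_zero, add_im, mul_im, zero_add, zero_mul, sub_zero, sub_re, sub_im]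
  ring

lemma integral_cexp_div_verticalLine (hv : v ≠ 0) (b : ℝ) {c : ℝ} (hc : 0 < c) :
    ∫ u : ℝ, cexp (v * (c + u * I) ^ 2 / 2 + b * (c + u * I)) / (c + u * I) =
      2 * π * cdf (gaussianReal 0 v) b := by
  have hlaplace (u : ℝ) : cexp (v * (c + u * I) ^ 2 / 2 + b * (c + u * I)) / (c + u * I) =
      ∫ y in Ioi (0 : ℝ), cexp (v * (c + u * I) ^ 2 / 2 + (b - y) * (c + u * I)) := by
    have hsplit (y : ℝ) : cexp (v * (c + u * I) ^ 2 / 2 + (b - y) * (c + u * I)) =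
        cexp (v * (c + u * I) ^ 2 / 2 + b * (c + u * I)) * cexp (-(c + u * I) * y) := by
      rw [← Complex.exp_add]
      congr 1
      ring
    simp_rw [hsplit]
    rw [integral_const_mul, integral_exp_mul_complex_Ioi (by simpa using hc), ofReal_zero, mul_zero,
      Complex.exp_zero, neg_div_neg_eq, mul_one_div]
  calc ∫ u : ℝ, cexp (v * (c + u * I) ^ 2 / 2 + b * (c + u * I)) / (c + u * I)
      = ∫ u : ℝ, ∫ y in Ioi (0 : ℝ), cexp (v * (c + u * I) ^ 2 / 2 + (b - y) * (c + u * I)) :=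
        integral_congr_ae (.of_forall hlaplace)
    _ = ∫ y in Ioi (0 : ℝ), ∫ u : ℝ, cexp (v * (c + u * I) ^ 2 / 2 + (b - y) * (c + u * I)) :=
        integral_integral_swap (integrable_cexp_verticalLine_prod_Ioi hv b hc)
    _ = ∫ y in Ioi (0 : ℝ), 2 * π * (gaussianPDFReal 0 v (b - y) : ℂ) := by
        simp only [← integral_cexp_verticalLine hv c, ofReal_sub]
    _ = 2 * π * cdf (gaussianReal 0 v) b := by
        rw [integral_const_mul, integral_complex_ofReal,
          setIntegral_Ioi_comp_sub_left (gaussianPDFReal 0 v), sub_zero, cdf_gaussianReal hv]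

end GaussianIntegral

section ContourWeight

/-- The part `e^{t(w-α)} ((1-w)/(1-α))^N (α/w)^M` of the integrand that is regular at the pole
`w = α`, normalised to equal `1` there. The factors `1/w` of the original integrand are collected
in the last power, so that the shock integral has `N = n(t) - 1` and `M = x(t) + n(t) - 1`. -/
def contourWeight (α t : ℝ) (N M : ℤ) (w : ℂ) : ℂ :=
  cexp (t * (w - α)) * ((1 - w) / (1 - α)) ^ N * (α / w) ^ M

variable {α t ρ : ℝ} {N M : ℤ} {w : ℂ}

lemma differentiableAt_contourWeight (hα : α ≠ 0) (hN : 0 ≤ N) (hw : w ≠ 0) :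
    DifferentiableAt ℂ (contourWeight α t N M) w := by
  have hexp : DifferentiableAt ℂ (fun w : ℂ => cexp (t * (w - α))) w := by fun_prop
  have hfactor : DifferentiableAt ℂ (fun w : ℂ => ((1 - w) / (1 - α)) ^ N) w :=
    DifferentiableAt.zpow (by fun_prop) (.inr hN)
  have hpole : DifferentiableAt ℂ (fun w : ℂ => ((α : ℂ) / w) ^ M) w :=
    DifferentiableAt.zpow (by fun_prop (disch := exact hw))
      (.inl (div_ne_zero (ofReal_ne_zero.2 hα) hw))
  exact (hexp.mul hfactor).mul hpole

lemma measurable_contourWeight : Measurable (contourWeight α t N M) := by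
  unfold contourWeight
  fun_prop

lemma circleIntegral_contourWeight_mul_inv_eq {r : ℝ} (hα : α ≠ 0) (hN : 0 ≤ N) (hαρ : |α| < ρ)
    (hρr : ρ ≤ r) :
    ∮ w in C(0, r), contourWeight α t N M w * (w - α)⁻¹ =
      ∮ w in C(0, ρ), contourWeight α t N M w * (w - α)⁻¹ := by
  have hρ : 0 < ρ := (abs_nonneg α).trans_lt hαρ
  have hdiff (w : ℂ) (hw : ρ ≤ ‖w‖) :
      DifferentiableAt ℂ (fun w => contourWeight α t N M w * (w - α)⁻¹) w := by
    have hw0 : w ≠ 0 := norm_pos_iff.1 (hρ.trans_le hw)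
    have hwα : w - α ≠ 0 := by
      refine sub_ne_zero.2 fun h => (hαρ.trans_le hw).ne' ?_
      rw [h, Complex.norm_real, Real.norm_eq_abs]
    exact (differentiableAt_contourWeight hα hN hw0).mul ((differentiableAt_id.sub_const _).inv hwα)
  refine circleIntegral_eq_of_differentiable_on_annulus_off_countable hρ hρr countable_empty
    (fun w hw => (hdiff w ?_).continuousAt.continuousWithinAt) fun w hw => hdiff w ?_
  · simpa using hw.2
  · exact le_of_lt (by simpa using hw.1.2)

lemma one_sub_mul_exp_div_one_sub (hα : α ≠ 1) (ζ : ℂ) :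
    (1 - α * cexp ζ) / (1 - α) = 1 + -(α / (1 - α)) * (cexp ζ - 1) := by
  have hα' : (1 - α : ℂ) ≠ 0 := sub_ne_zero.2 (by exact_mod_cast hα.symm)
  field_simp
  ring

-- The last two terms of the exponent are of second order in `ζ`.
lemma contourWeight_mul_exp (hα : α ≠ 0) (hα1 : α ≠ 1) {ζ x : ℂ}
    (hx : x = -(α / (1 - α)) * (cexp ζ - 1)) (hx1 : 1 + x ≠ 0) :
    contourWeight α t N M (α * cexp ζ) =
      cexp ((α * t - α / (1 - α) * N - M) * ζ +
        (α * t - α / (1 - α) * N) * (cexp ζ - 1 - ζ) + N * (Complex.log (1 + x) - x)) := by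
  have hfactor : (1 - α * cexp ζ) / (1 - α) = cexp (Complex.log (1 + x)) := by
    rw [Complex.exp_log hx1, hx, one_sub_mul_exp_div_one_sub hα1]
  have hpole : α / (α * cexp ζ) = cexp (-ζ) := by
    rw [Complex.exp_neg, div_mul_cancel_left₀ (ofReal_ne_zero.2 hα)]
  rw [contourWeight, hfactor, hpole, ← Complex.exp_int_mul, ← Complex.exp_int_mul,
    ← Complex.exp_add, ← Complex.exp_add]
  congr 1
  linear_combination (N : ℂ) * hx

lemma contourWeight_mul_exp_sqrt (hα : α ≠ 0) (hα1 : α ≠ 1) (ht : 0 < t) {ζ x : ℂ}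
    (hx : x = -(α / (1 - α)) * (cexp ζ - 1)) (hx1 : 1 + x ≠ 0) :
    contourWeight α t N M (α * cexp ζ) =
      cexp ((α * t - α / (1 - α) * N - M) / √t * (√t * ζ) +
        (α - α / (1 - α) * (N / t)) * (√t ^ 2 * (cexp ζ - 1 - ζ)) +
        N / t * (√t ^ 2 * (Complex.log (1 + x) - x))) := by
  have hs : (√t : ℂ) ≠ 0 := ofReal_ne_zero.2 (Real.sqrt_pos.2 ht).ne'
  have hs2 : (√t : ℂ) ^ 2 = t := by rw [← ofReal_pow, Real.sq_sqrt ht.le]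
  have hNt : (N / t * t : ℂ) = N := div_mul_cancel₀ _ (ofReal_ne_zero.2 ht.ne')
  rw [contourWeight_mul_exp hα hα1 hx hx1, hs2, ← mul_assoc _ _ ζ, div_mul_cancel₀ _ hs]
  congr 1
  linear_combination (α / (1 - α) * (cexp ζ - 1 - ζ) - (Complex.log (1 + x) - x)) * hNt

lemma sq_norm_one_sub_mul_exp (ρ θ : ℝ) :
    ‖1 - ρ * cexp (θ * I)‖ ^ 2 = (1 - ρ) ^ 2 + 2 * (ρ * (1 - Real.cos θ)) := by
  rw [Complex.sq_norm, Complex.normSq_apply]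
  simp only [sub_re, one_re, re_ofReal_mul, Complex.exp_ofReal_mul_I_re, sub_im, one_im,
    im_ofReal_mul, Complex.exp_ofReal_mul_I_im]
  linear_combination ρ ^ 2 * Real.sin_sq_add_cos_sq θ

lemma norm_one_sub_mul_exp_le (hρ : ρ ≠ 1) (θ : ℝ) :
    ‖1 - ρ * cexp (θ * I)‖ ≤ ‖(1 - ρ : ℂ)‖ * rexp (ρ * (1 - Real.cos θ) / (1 - ρ) ^ 2) := by
  have hρ' : 1 - ρ ≠ 0 := sub_ne_zero.2 hρ.symm
  have hnorm : ‖(1 - ρ : ℂ)‖ ^ 2 = (1 - ρ) ^ 2 := by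
    rw [← ofReal_one, ← ofReal_sub, Complex.norm_real, Real.norm_eq_abs, sq_abs]
  refine le_of_sq_le_sq ?_ (by positivity)
  calc ‖1 - ρ * cexp (θ * I)‖ ^ 2
      = (1 - ρ) ^ 2 * ((2 : ℕ) * (ρ * (1 - Real.cos θ) / (1 - ρ) ^ 2) + 1) := by
        rw [sq_norm_one_sub_mul_exp]
        push_cast
        field_simp
        ring
    _ ≤ (1 - ρ) ^ 2 * rexp ((2 : ℕ) * (ρ * (1 - Real.cos θ) / (1 - ρ) ^ 2)) := by
        gcongr
        exact Real.add_one_le_exp _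
    _ = (‖(1 - ρ : ℂ)‖ * rexp (ρ * (1 - Real.cos θ) / (1 - ρ) ^ 2)) ^ 2 := by
        rw [Real.exp_nat_mul, mul_pow, hnorm]

lemma norm_exp_mul_circle_sub (α t ρ θ : ℝ) :
    ‖cexp (t * (ρ * cexp (θ * I) - α))‖ =
      ‖cexp (t * (ρ - α))‖ * rexp (-(t * (ρ * (1 - Real.cos θ)))) := by
  rw [Complex.norm_exp, Complex.norm_exp, ← Real.exp_add]
  simp only [re_ofReal_mul, sub_re, ofReal_re, Complex.exp_ofReal_mul_I_re]
  congr 1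
  ring

lemma norm_contourWeight_circle_le (hN : 0 ≤ N) (hρ : ρ ≠ 1) (θ : ℝ) :
    ‖contourWeight α t N M (ρ * cexp (θ * I))‖ ≤ ‖contourWeight α t N M ρ‖ *
      rexp (-(ρ * (1 - Real.cos θ) * (t - N / (1 - ρ) ^ 2))) := by
  lift N to ℕ using hN
  set δ := ρ * (1 - Real.cos θ)
  have hdecay : rexp (-(δ * (t - N / (1 - ρ) ^ 2))) =
      rexp (-(t * δ)) * rexp (δ / (1 - ρ) ^ 2) ^ N := by
    rw [← Real.exp_nat_mul, ← Real.exp_add]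
    congr 1
    ring
  simp only [contourWeight, zpow_natCast, norm_mul, norm_zpow, norm_pow, norm_div,
    Complex.norm_exp_ofReal_mul_I, mul_one, Int.cast_natCast]
  calc _ ≤ ‖cexp (t * (ρ - α))‖ * rexp (-(t * δ)) *
        (‖(1 - ρ : ℂ)‖ * rexp (δ / (1 - ρ) ^ 2) / ‖(1 - α : ℂ)‖) ^ N *
        (‖(α : ℂ)‖ / ‖(ρ : ℂ)‖) ^ M := by
        rw [norm_exp_mul_circle_sub]
        gcongr
        exact norm_one_sub_mul_exp_le hρ θ
    _ = _ := by
        rw [hdecay, mul_div_right_comm, mul_pow]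
        ring

end ContourWeight

section SaddleScaling

lemma exp_div_eq_exp_mul_exp_I (c s u : ℝ) :
    cexp ((c + u * I) / s) = (rexp (c / s) : ℝ) * cexp ((u / s : ℝ) * I) := by
  rw [ofReal_exp, ← Complex.exp_add]
  push_cast
  congr 1
  ring

lemma circleIntegral_eq_intervalIntegral_exp {E : Type*} [NormedAddCommGroup E] [NormedSpace ℂ E]
    (f : ℂ → E) (a c : ℝ) {s : ℝ} (hs : s ≠ 0) :
    ∮ w in C(0, a * rexp (c / s)), f w = ∫ u in (-π * s)..(π * s),
      (I / s * (a * cexp ((c + u * I) / s))) • f (a * cexp ((c + u * I) / s)) := by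
  set R := a * rexp (c / s)
  set g : ℝ → E := fun θ => deriv (circleMap 0 R) θ • f (circleMap 0 R θ)
  have hperiodic : Function.Periodic g (2 * π) := fun θ => by
    simp only [g, deriv_circleMap, periodic_circleMap 0 R θ]
  have hcircle (u : ℝ) : circleMap 0 R (u / s) = a * cexp ((c + u * I) / s) := by
    rw [circleMap, zero_add, exp_div_eq_exp_mul_exp_I, ofReal_mul, mul_assoc]
  calc ∮ w in C(0, R), f w = ∫ θ in (-π)..π, g θ := by
        rw [circleIntegral, ← zero_add (2 * π), hperiodic.intervalIntegral_add_eq 0 (-π),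
          show -π + 2 * π = π by ring]
    _ = (s : ℂ)⁻¹ • ∫ u in (-π * s)..(π * s), g (u / s) := by
        rw [← ofReal_inv, Complex.coe_smul, intervalIntegral.inv_smul_integral_comp_div,
          mul_div_cancel_right₀ _ hs, mul_div_cancel_right₀ _ hs]
    _ = _ := by
        rw [← intervalIntegral.integral_smul]
        congr 1 with u
        simp only [g, deriv_circleMap, hcircle, smul_smul]
        congr 1
        ring

/-- The integrand of the contour integral in the variable `u`, where
`w = α exp ((1 + iu)/√t)` runs through the circle of radius `α exp (1/√t)`. -/
def scaledIntegrand (α t : ℝ) (N M : ℤ) (u : ℝ) : ℂ :=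
  contourWeight α t N M (α * cexp ((1 + u * I) / √t)) *
    (√t * (1 - cexp (-((1 + u * I) / √t))))⁻¹

variable {α t : ℝ} {N M : ℤ}

lemma measurable_scaledIntegrand : Measurable (scaledIntegrand α t N M) :=
  (measurable_contourWeight.comp (by fun_prop)).mul (by fun_prop)

lemma circleIntegral_contourWeight_eq_integral_scaledIntegrand (hα : α ≠ 0) (ht : 0 < t) :
    (2 * π * I : ℂ)⁻¹ * ∮ w in C(0, α * rexp (1 / √t)), contourWeight α t N M w * (w - α)⁻¹ =
      (2 * π : ℂ)⁻¹ * ∫ u in (-π * √t)..(π * √t), scaledIntegrand α t N M u := by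
  have hs : √t ≠ 0 := (Real.sqrt_pos.2 ht).ne'
  have hintegrand (u : ℝ) : (I / √t * (α * cexp ((1 + u * I) / √t))) •
      (contourWeight α t N M (α * cexp ((1 + u * I) / √t)) *
        (α * cexp ((1 + u * I) / √t) - α)⁻¹) = I * scaledIntegrand α t N M u := by
    have hpole : α * cexp ((1 + u * I) / √t) - α =
        α * cexp ((1 + u * I) / √t) * (1 - cexp (-((1 + u * I) / √t))) := by
      rw [mul_sub, mul_assoc _ _ (cexp _), ← Complex.exp_add]
      simp only [add_neg_cancel, Complex.exp_zero, mul_one]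
    have hαc : (α : ℂ) ≠ 0 := ofReal_ne_zero.2 hα
    rw [scaledIntegrand, hpole, smul_eq_mul, mul_inv, mul_inv]
    field_simp
  rw [circleIntegral_eq_intervalIntegral_exp _ _ _ hs]
  simp only [ofReal_one, hintegrand]
  rw [intervalIntegral.integral_const_mul, ← mul_assoc, mul_inv, inv_mul_cancel_right₀ I_ne_zero]

lemma norm_inv_mul_one_sub_exp_le {s : ℝ} (hs : 1 ≤ s) (u : ℝ) :
    ‖((s : ℂ) * (1 - cexp (-((1 + u * I) / s))))⁻¹‖ ≤ 2 := by
  have hs0 : 0 < s := zero_lt_one.trans_le hs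
  have hexp : rexp (-(1 / s)) ≤ (1 + 1 / s)⁻¹ := by
    rw [Real.exp_neg]
    gcongr
    linarith [Real.add_one_le_exp (1 / s)]
  have hnorm : 1 - rexp (-(1 / s)) ≤ ‖1 - cexp (-((1 + u * I) / s))‖ := by
    have htriangle := norm_sub_norm_le (1 : ℂ) (cexp (-((1 + u * I) / s)))
    rw [norm_one, Complex.norm_exp, neg_re, Complex.div_ofReal_re] at htriangle
    simpa using htriangle
  rw [norm_inv, norm_mul, Complex.norm_real, Real.norm_of_nonneg hs0.le]
  refine inv_le_of_inv_le₀ two_pos ?_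
  calc (2 : ℝ)⁻¹ ≤ s / (s + 1) := by
        rw [le_div_iff₀ (by linarith)]
        linarith
    _ = s * (1 - (1 + 1 / s)⁻¹) := by
        field_simp
        ring
    _ ≤ s * ‖1 - cexp (-((1 + u * I) / s))‖ := by
        gcongr
        linarith

-- Jordan's inequality `1 - cos θ ≥ 2θ²/π²` turns the decay along the circle into Gaussian decay.
lemma norm_scaledIntegrand_le {κ u : ℝ} (hα : 0 < α) (ht : 1 ≤ t) (hN : 0 ≤ N) (hκ : 0 ≤ κ)
    (hρ : α * rexp (1 / √t) ≠ 1) (hκt : κ * t ≤ t - N / (1 - α * rexp (1 / √t)) ^ 2)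
    (hu : |u| ≤ π * √t) :
    ‖scaledIntegrand α t N M u‖ ≤ ‖contourWeight α t N M (α * cexp (1 / √t))‖ * 2 *
      rexp (-(α * κ * (2 / π ^ 2)) * u ^ 2) := by
  have ht0 : 0 < t := zero_lt_one.trans_le ht
  have hs : 0 < √t := Real.sqrt_pos.2 ht0
  set ρ := α * rexp (1 / √t) with hρ_def
  have hαρ : α ≤ ρ := le_mul_of_one_le_right hα.le (Real.one_le_exp (by positivity))
  have hradius : (α * cexp (1 / √t) : ℂ) = ρ := by
    rw [hρ_def]
    push_cast
    rfl
  have hpoint : (α * cexp ((1 + u * I) / √t) : ℂ) = ρ * cexp ((u / √t : ℝ) * I) := by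
    rw [← ofReal_one, exp_div_eq_exp_mul_exp_I, ← mul_assoc, ← ofReal_mul]
  have hcos : 2 / π ^ 2 * (u / √t) ^ 2 ≤ 1 - Real.cos (u / √t) := by
    have hangle : |u / √t| ≤ π := by rwa [abs_div, abs_of_pos hs, div_le_iff₀ hs]
    linarith [Real.cos_le_one_sub_mul_cos_sq hangle]
  have hdecay : α * κ * (2 / π ^ 2) * u ^ 2 ≤
      ρ * (1 - Real.cos (u / √t)) * (t - N / (1 - ρ) ^ 2) := by
    calc α * κ * (2 / π ^ 2) * u ^ 2 = α * (2 / π ^ 2 * (u / √t) ^ 2) * (κ * t) := by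
          rw [div_pow, Real.sq_sqrt ht0.le]
          field_simp
      _ ≤ ρ * (1 - Real.cos (u / √t)) * (t - N / (1 - ρ) ^ 2) := by
          gcongr
          exact mul_nonneg (hα.le.trans hαρ) (le_trans (by positivity) hcos)
  rw [scaledIntegrand, norm_mul, hpoint, hradius]
  calc _ ≤ ‖contourWeight α t N M ρ‖ * rexp (-(ρ * (1 - Real.cos (u / √t)) *
        (t - N / (1 - ρ) ^ 2))) * 2 := by
        gcongr
        · exact norm_contourWeight_circle_le hN hρ _
        · exact norm_inv_mul_one_sub_exp_le (Real.one_le_sqrt.2 ht) u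
    _ ≤ ‖contourWeight α t N M ρ‖ * rexp (-(α * κ * (2 / π ^ 2)) * u ^ 2) * 2 := by
        rw [neg_mul]
        gcongr
    _ = _ := by ring

end SaddleScaling

section SaddleLimit

lemma tendsto_div_sqrt_atTop (z : ℂ) : Tendsto (fun t : ℝ => z / √t) atTop (𝓝 0) := by
  have hinv : Tendsto (fun t : ℝ => (√t : ℂ)⁻¹) atTop (𝓝 0) :=
    tendsto_inv₀_cobounded.comp
      ((RCLike.tendsto_ofReal_atTop_cobounded ℂ).comp Real.tendsto_sqrt_atTop)
  simpa only [mul_zero, ← div_eq_mul_inv] using hinv.const_mul z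

lemma tendsto_sqrt_mul_div_sqrt_atTop (z : ℂ) :
    Tendsto (fun t : ℝ => √t * (z / √t)) atTop (𝓝 z) := by
  refine tendsto_const_nhds.congr' ?_
  filter_upwards [eventually_gt_atTop 0] with t ht
  rw [mul_div_cancel₀ z (ofReal_ne_zero.2 (Real.sqrt_pos.2 ht).ne')]

variable {α ν b : ℝ} {N M : ℝ → ℤ}

lemma tendsto_contourWeight (hα : α ≠ 0) (hα1 : α ≠ 1)
    (hN : Tendsto (fun t => (N t : ℝ) / t) atTop (𝓝 ν))
    (hb : Tendsto (fun t => (α * t - α / (1 - α) * N t - M t) / √t) atTop (𝓝 b)) (z : ℂ) :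
    Tendsto (fun t => contourWeight α t (N t) (M t) (α * cexp (z / √t))) atTop
      (𝓝 (cexp ((α * (1 - ν / (1 - α) ^ 2) : ℝ) * z ^ 2 / 2 + b * z))) := by
  have hα' : (1 - α : ℂ) ≠ 0 := sub_ne_zero.2 (by exact_mod_cast hα1.symm)
  set p : ℂ := α / (1 - α)
  set x : ℝ → ℂ := fun t => -p * (cexp (z / √t) - 1)
  have hζ := tendsto_div_sqrt_atTop z
  have hsζ := tendsto_sqrt_mul_div_sqrt_atTop z
  have hx : Tendsto x atTop (𝓝 0) := by
    simpa [x] using (hζ.cexp.sub_const 1).const_mul (-p)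
  have hsx : Tendsto (fun t => √t * x t) atTop (𝓝 (-p * z)) :=
    ((tendsto_mul_exp_sub_one hζ hsζ).const_mul (-p)).congr fun t => by ring
  have hNc : Tendsto (fun t => (N t / t : ℂ)) atTop (𝓝 ν) := by exact_mod_cast hN.ofReal
  have hbc : Tendsto (fun t : ℝ => (α * t - p * N t - M t) / (√t : ℂ)) atTop (𝓝 b) := by
    simpa only [p, ofReal_div, ofReal_sub, ofReal_mul, ofReal_one, ofReal_intCast] using hb.ofReal
  have hexponent := ((hbc.mul hsζ).add
    (((hNc.const_mul p).const_sub (α : ℂ)).mul (tendsto_sq_mul_exp_sub_one_sub hζ hsζ))).add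
    (hNc.mul (tendsto_sq_mul_log_one_add_sub hx hsx))
  have hlimit : ((α * (1 - ν / (1 - α) ^ 2) : ℝ) * z ^ 2 / 2 + b * z : ℂ) =
      b * z + (α - p * ν) * (1 / 2 * z ^ 2) + ν * (-1 / 2 * (-p * z) ^ 2) := by
    simp only [p]
    push_cast
    field_simp
    ring
  rw [hlimit]
  refine hexponent.cexp.congr' ?_
  filter_upwards [eventually_gt_atTop 0, hx.eventually_ne (neg_ne_zero.2 one_ne_zero).symm]
    with t ht hxt
  exact (contourWeight_mul_exp_sqrt hα hα1 ht rfl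
    fun h => hxt (eq_neg_of_add_eq_zero_right h)).symm

lemma tendsto_scaledIntegrand (hα : α ≠ 0) (hα1 : α ≠ 1)
    (hN : Tendsto (fun t => (N t : ℝ) / t) atTop (𝓝 ν))
    (hb : Tendsto (fun t => (α * t - α / (1 - α) * N t - M t) / √t) atTop (𝓝 b)) (u : ℝ) :
    Tendsto (fun t => scaledIntegrand α t (N t) (M t) u) atTop
      (𝓝 (cexp ((α * (1 - ν / (1 - α) ^ 2) : ℝ) * (1 + u * I) ^ 2 / 2 + b * (1 + u * I)) /
        (1 + u * I))) := by
  have hu : (1 + u * I : ℂ) ≠ 0 := fun h => by simpa using congrArg re h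
  have hdenominator : Tendsto (fun t : ℝ => √t * (1 - cexp (-((1 + u * I) / √t)))) atTop
      (𝓝 (1 + u * I)) := by
    have hζ := tendsto_div_sqrt_atTop (1 + u * I)
    have hsζ := tendsto_sqrt_mul_div_sqrt_atTop (1 + u * I)
    have hexp := tendsto_mul_exp_sub_one (z := -(1 + u * I)) (by simpa using hζ.neg)
      (hsζ.neg.congr fun t => (mul_neg _ _).symm)
    simpa only [neg_neg, ← mul_neg, neg_sub] using hexp.neg
  exact (tendsto_contourWeight hα hα1 hN hb _).mul (hdenominator.inv₀ hu)

lemma tendsto_mul_exp_inv_sqrt_atTop (α : ℝ) :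
    Tendsto (fun t => α * rexp (1 / √t)) atTop (𝓝 α) := by
  have hexp := (Real.tendsto_sqrt_atTop.const_div_atTop 1).rexp
  simpa only [Real.exp_zero, mul_one] using hexp.const_mul α

lemma eventually_mul_le_sub_div_sq {κ : ℝ} (hα1 : α ≠ 1) (hκ : κ < 1 - ν / (1 - α) ^ 2)
    (hN : Tendsto (fun t => (N t : ℝ) / t) atTop (𝓝 ν)) :
    ∀ᶠ t in atTop, κ * t ≤ t - N t / (1 - α * rexp (1 / √t)) ^ 2 := by
  have hlim : Tendsto (fun t => 1 - N t / t / (1 - α * rexp (1 / √t)) ^ 2) atTop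
      (𝓝 (1 - ν / (1 - α) ^ 2)) :=
    (hN.div (((tendsto_mul_exp_inv_sqrt_atTop α).const_sub 1).pow 2)
      (pow_ne_zero 2 (sub_ne_zero.2 hα1.symm))).const_sub 1
  filter_upwards [hlim.eventually_const_le hκ, eventually_gt_atTop 0] with t hgap ht
  calc κ * t ≤ (1 - N t / t / (1 - α * rexp (1 / √t)) ^ 2) * t := by gcongr
    _ = t - N t / (1 - α * rexp (1 / √t)) ^ 2 := by
        rw [sub_mul, one_mul, div_right_comm, div_mul_cancel₀ _ ht.ne']

lemma eventually_nonneg_of_tendsto_div (hν : 0 < ν)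
    (hN : Tendsto (fun t => (N t : ℝ) / t) atTop (𝓝 ν)) : ∀ᶠ t in atTop, 0 ≤ N t := by
  filter_upwards [hN.eventually_const_lt hν, eventually_gt_atTop 0] with t hNt ht
  exact_mod_cast ((div_pos_iff_of_pos_right ht).1 hNt).le

lemma one_sub_div_sq_pos (hν : 0 < ν) (hνα : ν < (1 - α) ^ 2) : 0 < 1 - ν / (1 - α) ^ 2 := by
  rwa [sub_pos, div_lt_one (hν.trans hνα)]

lemma ne_one_of_pos_of_lt_sq (hν : 0 < ν) (hνα : ν < (1 - α) ^ 2) : α ≠ 1 := by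
  rintro rfl
  linarith

lemma exists_eventually_norm_scaledIntegrand_le (hα : 0 < α) (hν : 0 < ν)
    (hνα : ν < (1 - α) ^ 2) (hN : Tendsto (fun t => (N t : ℝ) / t) atTop (𝓝 ν))
    (hb : Tendsto (fun t => (α * t - α / (1 - α) * N t - M t) / √t) atTop (𝓝 b)) :
    ∃ C c : ℝ, 0 ≤ C ∧ 0 < c ∧ ∀ᶠ t in atTop, ∀ u : ℝ, |u| ≤ π * √t →
      ‖scaledIntegrand α t (N t) (M t) u‖ ≤ C * rexp (-c * u ^ 2) := by
  have hα1 := ne_one_of_pos_of_lt_sq hν hνα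
  obtain ⟨κ, hκ, hκgap⟩ := exists_between (one_sub_div_sq_pos hν hνα)
  obtain ⟨C, hC⟩ :=
    (tendsto_contourWeight hα.ne' hα1 hN hb 1).norm.isBoundedUnder_le.eventually_le
  refine ⟨|C| * 2, α * κ * (2 / π ^ 2), by positivity, by positivity, ?_⟩
  filter_upwards [hC, eventually_ge_atTop 1, eventually_nonneg_of_tendsto_div hν hN,
    (tendsto_mul_exp_inv_sqrt_atTop α).eventually_ne hα1,
    eventually_mul_le_sub_div_sq hα1 hκgap hN] with t hCt ht hNt hρ hκt u hu
  refine (norm_scaledIntegrand_le hα ht hNt hκ.le hρ hκt hu).trans ?_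
  gcongr
  exact hCt.trans (le_abs_self C)

lemma tendsto_intervalIntegral_scaledIntegrand (hα : 0 < α) (hν : 0 < ν)
    (hνα : ν < (1 - α) ^ 2) (hN : Tendsto (fun t => (N t : ℝ) / t) atTop (𝓝 ν))
    (hb : Tendsto (fun t => (α * t - α / (1 - α) * N t - M t) / √t) atTop (𝓝 b)) :
    Tendsto (fun t => ∫ u in (-π * √t)..(π * √t), scaledIntegrand α t (N t) (M t) u) atTop
      (𝓝 (∫ u : ℝ, cexp ((α * (1 - ν / (1 - α) ^ 2) : ℝ) * (1 + u * I) ^ 2 / 2 +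
        b * (1 + u * I)) / (1 + u * I))) := by
  obtain ⟨C, c, hC, hc, hbound⟩ := exists_eventually_norm_scaledIntegrand_le hα hν hνα hN hb
  have hπs : Tendsto (fun t => π * √t) atTop atTop :=
    Real.tendsto_sqrt_atTop.const_mul_atTop Real.pi_pos
  have hindicator (t : ℝ) : ∫ u in (-π * √t)..(π * √t), scaledIntegrand α t (N t) (M t) u =
      ∫ u, (Ioc (-π * √t) (π * √t)).indicator (scaledIntegrand α t (N t) (M t)) u := by
    rw [intervalIntegral.integral_of_le (by nlinarith [Real.pi_pos, Real.sqrt_nonneg t]),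
      integral_indicator measurableSet_Ioc]
  simp_rw [hindicator]
  refine tendsto_integral_filter_of_dominated_convergence (fun u => C * rexp (-c * u ^ 2))
    (.of_forall fun t =>
      (measurable_scaledIntegrand.indicator measurableSet_Ioc).aestronglyMeasurable) ?_
    ((integrable_exp_neg_mul_sq hc).const_mul C) (.of_forall fun u => ?_)
  · filter_upwards [hbound] with t ht
    refine .of_forall fun u => ?_
    rw [norm_indicator_eq_indicator_norm]
    refine indicator_le' (fun u hu => ht u ?_) (fun u _ => by positivity) u
    rw [abs_le, ← neg_mul]
    exact ⟨hu.1.le, hu.2⟩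
  · refine (tendsto_scaledIntegrand hα.ne' (ne_one_of_pos_of_lt_sq hν hνα) hN hb u).congr' ?_
    filter_upwards [hπs.eventually_gt_atTop |u|] with t ht
    have hu : u ∈ Ioc (-π * √t) (π * √t) := by
      rw [neg_mul]
      exact ⟨(abs_lt.1 ht).1, (abs_lt.1 ht).2.le⟩
    rw [indicator_of_mem hu]

theorem tendsto_circleIntegral_contourWeight {r : ℝ} (hα : 0 < α) (hν : 0 < ν)
    (hνα : ν < (1 - α) ^ 2) (hN : Tendsto (fun t => (N t : ℝ) / t) atTop (𝓝 ν))
    (hb : Tendsto (fun t => (α * t - α / (1 - α) * N t - M t) / √t) atTop (𝓝 b)) (hr : α < r) :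
    Tendsto (fun t => (2 * π * I : ℂ)⁻¹ *
        ∮ w in C(0, r), contourWeight α t (N t) (M t) w * (w - α)⁻¹) atTop
      (𝓝 (cdf (gaussianReal 0 (α * (1 - ν / (1 - α) ^ 2)).toNNReal) b : ℝ)) := by
  have hvar : 0 < α * (1 - ν / (1 - α) ^ 2) := mul_pos hα (one_sub_div_sq_pos hν hνα)
  have hgaussian := integral_cexp_div_verticalLine (Real.toNNReal_pos.2 hvar).ne' b one_pos
  rw [Real.coe_toNNReal _ hvar.le, ofReal_one] at hgaussian
  have hlimit := (tendsto_intervalIntegral_scaledIntegrand hα hν hνα hN hb).const_mul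
    (2 * π : ℂ)⁻¹
  rw [hgaussian, inv_mul_cancel_left₀ (by simp [Real.pi_ne_zero])] at hlimit
  refine hlimit.congr' ?_
  filter_upwards [eventually_gt_atTop 0, eventually_nonneg_of_tendsto_div hν hN,
    (tendsto_mul_exp_inv_sqrt_atTop α).eventually_le_const hr] with t ht hNt hρr
  have hαρ : |α| < α * rexp (1 / √t) := by
    rw [abs_of_pos hα]
    exact lt_mul_of_one_lt_right hα (Real.one_lt_exp_iff.2 (by positivity))
  rw [circleIntegral_contourWeight_mul_inv_eq hα.ne' hNt hαρ hρr,
    circleIntegral_contourWeight_eq_integral_scaledIntegrand hα.ne' ht]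

end SaddleLimit

section Shock

/-- The particle index `n(t)`, which enters the exponents of `shockInt`. -/
def particleIndex (α η t : ℝ) : ℤ := ⌊(1 - α) * t / 2 + η * √t⌋

/-- The position threshold `x(t)` in the shock integral. -/
def shockPosition (α η ξ t : ℝ) : ℤ := ⌊t / 2 - ξ * √t⌋ - 2 * particleIndex α η t

lemma tendsto_particleIndex_sub_one_div (α η : ℝ) :
    Tendsto (fun t => ((particleIndex α η t - 1 : ℤ) : ℝ) / t) atTop (𝓝 ((1 - α) / 2)) := by
  have hfract : Tendsto (fun t => Int.fract ((1 - α) * t / 2 + η * √t) / t) atTop (𝓝 0) :=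
    tendsto_fract_div_atTop tendsto_id
  have hlim := (((Real.tendsto_sqrt_atTop.const_div_atTop η).const_add ((1 - α) / 2)).sub
    hfract).sub (tendsto_id.const_div_atTop (1 : ℝ))
  rw [add_zero, sub_zero, sub_zero] at hlim
  refine hlim.congr' ?_
  filter_upwards [eventually_gt_atTop 0] with t ht
  have hsqrt : η / √t = η * √t / t := by
    rw [mul_div_assoc, Real.sqrt_div_self, div_eq_mul_inv]
  rw [hsqrt, particleIndex, Int.cast_sub, ← Int.self_sub_fract, Int.cast_one, id]
  field_simp

lemma tendsto_shock_linear_coefficient {α : ℝ} (hα : α ≠ 1) (η ξ : ℝ) :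
    Tendsto (fun t => (α * t - α / (1 - α) * (particleIndex α η t - 1 : ℤ) -
        (shockPosition α η ξ t + particleIndex α η t - 1 : ℤ)) / √t) atTop
      (𝓝 (ξ + (1 - 2 * α) * η / (1 - α))) := by
  have hα' : 1 - α ≠ 0 := sub_ne_zero.2 hα.symm
  set p := α / (1 - α)
  have hlim := ((tendsto_fract_div_atTop (f := fun t => t / 2 - ξ * √t)
    Real.tendsto_sqrt_atTop).add ((tendsto_fract_div_atTop
      (f := fun t => (1 - α) * t / 2 + η * √t) Real.tendsto_sqrt_atTop).const_mul (p - 1))).add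
    ((Real.tendsto_sqrt_atTop.const_div_atTop (p + 1)).const_add (ξ + (1 - 2 * α) * η / (1 - α)))
  rw [mul_zero, add_zero, add_zero, zero_add] at hlim
  refine hlim.congr' ?_
  filter_upwards [eventually_gt_atTop 0] with t ht
  have hs : √t ≠ 0 := (Real.sqrt_pos.2 ht).ne'
  simp only [shockPosition, particleIndex, Int.cast_sub, Int.cast_add, Int.cast_mul,
    ← Int.self_sub_fract, Int.cast_one, Int.cast_ofNat, p]
  field_simp
  ring

lemma shockInt_eq_circleIntegral_contourWeight {α r : ℝ} (hα : α ≠ 0) (hr : 0 < r) (η ξ t : ℝ) :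
    shockInt α η ξ r t = (2 * π * I : ℂ)⁻¹ * ∮ w in C(0, r),
      contourWeight α t (particleIndex α η t - 1)
        (shockPosition α η ξ t + particleIndex α η t - 1) w * (w - α)⁻¹ := by
  rw [shockInt]
  congr 1
  refine circleIntegral.integral_congr hr.le fun w hw => ?_
  have hw0 : w ≠ 0 := ne_zero_of_mem_sphere hr.ne' ⟨w, hw⟩
  have hbase : (w - 1) * α / ((α - 1 : ℝ) * w) = (1 - w) / (1 - α) * (α / w) := by
    rw [div_mul_div_comm, ← neg_div_neg_eq]
    push_cast
    congr 1 <;> ring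
  have hexponent : shockPosition α η ξ t + particleIndex α η t - 1 =
      (particleIndex α η t - 1) + shockPosition α η ξ t := by ring
  simp only [contourWeight, hexponent, zpow_add₀ (div_ne_zero (ofReal_ne_zero.2 hα) hw0)]
  rw [← particleIndex, ← shockPosition, hbase, mul_zpow]
  ring

lemma gaussLimit_eq_cdf {α : ℝ} (hσ : 0 < α * (1 - 2 * α) / (2 * (1 - α))) (η ξ : ℝ) :
    gaussLimit α η ξ = cdf (gaussianReal 0 (α * (1 - 2 * α) / (2 * (1 - α))).toNNReal)
      (ξ + (1 - 2 * α) * η / (1 - α)) := by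
  rw [cdf_gaussianReal (Real.toNNReal_pos.2 hσ).ne', gaussLimit, ← integral_const_mul]
  simp only [gaussianPDFReal, sub_zero, Real.coe_toNNReal _ hσ.le]

theorem shock_gaussian_limit_general (α : ℝ) (hα0 : 0 < α) (hα1 : α < 1 / 2) (η ξ r : ℝ)
    (hr : α < r) :
    Tendsto (fun t : ℝ => shockInt α η ξ r t) atTop (𝓝 (gaussLimit α η ξ : ℂ)) := by
  have hα' : 0 < 1 - α := by linarith
  have hσ : 0 < α * (1 - 2 * α) / (2 * (1 - α)) := by
    have : 0 < 1 - 2 * α := by linarith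
    positivity
  have hvariance : α * (1 - (1 - α) / 2 / (1 - α) ^ 2) = α * (1 - 2 * α) / (2 * (1 - α)) := by
    field_simp
    ring
  simp_rw [shockInt_eq_circleIntegral_contourWeight hα0.ne' (hα0.trans hr)]
  rw [gaussLimit_eq_cdf hσ, ← hvariance]
  exact tendsto_circleIntegral_contourWeight hα0 (by positivity) (by nlinarith)
    (tendsto_particleIndex_sub_one_div α η)
    (tendsto_shock_linear_coefficient (sub_pos.1 hα').ne η ξ) hr

end Shock

/-- Gaussian fluctuations at the shock: for `0 < α < 1/2` and `ξ > 0`,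
`lim_{t→∞} I(t)` is the Gaussian distribution function evaluated at `ξ + ξ_c`. -/
theorem shock_gaussian_limit
    (α : ℝ) (hα0 : 0 < α) (hα1 : α < 1 / 2) (η ξ : ℝ) (hξ : 0 < ξ)
    (r : ℝ) (hr : α < r) :
    Tendsto (fun t : ℝ => shockInt α η ξ r t) atTop
      (nhds ((gaussLimit α η ξ : ℝ) : ℂ)) :=
  shock_gaussian_limit_general α hα0 hα1 η ξ r hr
end
end
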